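/- arXiv:1802.03210 — 2 statements merged into one kernel-verified Lean document; each statement's English description precedes it below -/
import Mathlib

section
/- For every n ≥ 3, let X_n be the order complex of the poset of nonempty proper subsets of {1, …, n} ordered by inclusion (i.e., the barycentric subdivision of the boundary of the (n−1)-simplex): its vertices are the subsets A with ∅ ≠ A ⊊ {1,…,n}, and its faces are the chains A_1 ⊊ A_2 ⊊ ⋯ ⊊ A_j of such subsets. Then h^{n−3}(X_n) = 4/(n(n−1)). -/
open Finset

section Simplicial

variable {V : Type*} [DecidableEq V]

/-- `X` is a finite abstract simplicial complex: a finite family of nonempty finite sets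
closed under taking nonempty subsets. -/
def IsComplex (X : Finset (Finset V)) : Prop :=
  (∀ σ ∈ X, σ.Nonempty) ∧ ∀ σ ∈ X, ∀ τ ⊆ σ, τ.Nonempty → τ ∈ X

/-- The `k`-dimensional faces of `X` (faces of cardinality `k+1`). -/
def faces (X : Finset (Finset V)) (k : ℕ) : Finset (Finset V) :=
  X.filter fun σ => σ.card = k + 1

/-- The support of a `k`-cochain. -/
def csupp (X : Finset (Finset V)) (k : ℕ) (φ : Finset V → ZMod 2) : Finset (Finset V) :=
  (faces X k).filter fun σ => φ σ ≠ 0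

/-- The norm of a `k`-cochain. -/
def cnorm (X : Finset (Finset V)) (k : ℕ) (φ : Finset V → ZMod 2) : ℕ :=
  (csupp X k φ).card

/-- The coboundary of a `k`-cochain, as a `(k+1)`-cochain. -/
def cob (X : Finset (Finset V)) (k : ℕ) (φ : Finset V → ZMod 2) : Finset V → ZMod 2 :=
  fun τ => ∑ σ ∈ (faces X k).filter (fun σ => σ ⊆ τ), φ σ

/-- The cosystolic norm of a `k`-cochain, with the reduced convention at `k = 0`. -/
noncomputable def cosys (X : Finset (Finset V)) (k : ℕ) (φ : Finset V → ZMod 2) : ℕ :=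
  if k = 0 then
    min (cnorm X 0 φ) (cnorm X 0 fun σ => 1 + φ σ)
  else
    sInf {m | ∃ ψ : Finset V → ZMod 2, m = cnorm X k fun τ => φ τ + cob X (k - 1) ψ τ}

/-- The `k`-th (coboundary) Cheeger constant, valued in `ℝ≥0∞` (`⊤` if no cochain has
positive cosystolic norm). -/
noncomputable def cheeger (X : Finset (Finset V)) (k : ℕ) : ENNReal :=
  sInf {r : ENNReal | ∃ φ : Finset V → ZMod 2, 0 < cosys X k φ ∧
    r = (cnorm X (k + 1) (cob X k φ) : ENNReal) / (cosys X k φ : ENNReal)}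

/-- The boundary of a `k`-chain, as a `(k-1)`-chain. -/
def bdry (X : Finset (Finset V)) (k : ℕ) (c : Finset V → ZMod 2) : Finset V → ZMod 2 :=
  fun τ => ∑ σ ∈ (faces X k).filter (fun σ => τ ⊆ σ), c σ

/-- A `k`-cycle, with the reduced convention at `k = 0`. -/
def IsCycle (X : Finset (Finset V)) (k : ℕ) (c : Finset V → ZMod 2) : Prop :=
  if k = 0 then ∑ σ ∈ faces X 0, c σ = 0
  else ∀ τ ∈ faces X (k - 1), bdry X k c τ = 0

/-- Evaluation of a `k`-cochain on a `k`-chain. -/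
def eval (X : Finset (Finset V)) (k : ℕ) (φ c : Finset V → ZMod 2) : ZMod 2 :=
  ∑ σ ∈ faces X k, φ σ * c σ

end Simplicial

/-- The order complex of the poset of nonempty proper subsets of `{1, …, n}` (i.e. the
barycentric subdivision of the boundary of the `(n-1)`-simplex): faces are the nonempty
chains of nonempty proper subsets of `Fin n`. -/
def sdBoundarySimplex (n : ℕ) : Finset (Finset (Finset (Fin n))) :=
  Finset.univ.filter fun σ =>
    σ.Nonempty ∧ (∀ A ∈ σ, A.Nonempty ∧ A ≠ Finset.univ) ∧
      ∀ A ∈ σ, ∀ B ∈ σ, A ⊆ B ∨ B ⊆ A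

/-!
A maximal face of the complex is a full flag of subsets, that is, a permutation, and a face of
codimension one lies in exactly two of them, which differ by an adjacent transposition. A cochain of
codimension one is thus a set of edges of the Cayley graph of the adjacent transpositions, and its
coboundary is the set of vertices of odd degree.

Cohomology in codimension one vanishes: take a vertex of maximal length on the support of a cocycle
`z`. All the edges of `z` at this vertex are descents, and there are at least two of them. Adding to
`z` the polygon through these two edges, which is a coboundary, trades them for edges at shorter
vertices; this decreases the multiset of the lengths in the Dershowitz–Manna order. Hence the
cosystolic norm of `φ` is the least size of a set of edges with the same odd vertices as `φ`.

Two vertices are joined by a path of length at most `n(n-1)/2`, so joining the odd vertices of `φ`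
in pairs gives `2‖φ‖_csy ≤ (n(n-1)/2) ‖dφ‖`. Equality holds for a path joining two opposite
permutations: for each pair `{x, y}`, a set of edges with these two odd vertices has an edge that
exchanges `x` and `y`.
-/

open Equiv

section Cochains

variable {V : Type*} {X : Finset (Finset V)} {k : ℕ}

lemma cnorm_congr {φ ψ : Finset V → ZMod 2} (h : ∀ σ ∈ faces X k, φ σ = ψ σ) :
    cnorm X k φ = cnorm X k ψ := by
  rw [cnorm, cnorm, csupp, csupp, filter_congr fun σ hσ => by rw [h σ hσ]]

@[simp]
lemma cnorm_zero : cnorm X k 0 = 0 := by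
  simp [cnorm, csupp]

lemma cnorm_add_le (φ ψ : Finset V → ZMod 2) :
    cnorm X k (φ + ψ) ≤ cnorm X k φ + cnorm X k ψ := by
  classical
  refine (card_le_card fun σ hσ => ?_).trans (card_union_le _ _)
  simp only [csupp, mem_filter, mem_union, Pi.add_apply] at hσ ⊢
  by_contra! h
  exact hσ.2 (by rw [h.1 hσ.1, h.2 hσ.1, add_zero])

variable [DecidableEq V]

lemma cnorm_single_le (ρ : Finset V) : cnorm X k (Pi.single ρ 1) ≤ 1 := by
  refine (card_le_card fun σ hσ => ?_).trans (card_singleton ρ).le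
  by_contra h
  exact (mem_filter.1 hσ).2 (Pi.single_eq_of_ne (by simpa using h) _)

/-- The coboundary operator of the full simplex on `V`, in all dimensions at once. The empty set
counts as a face, which on `0`-cochains yields the reduced convention of `cosys`. -/
def fullCob : (Finset V → ZMod 2) →ₗ[ZMod 2] (Finset V → ZMod 2) where
  toFun φ τ := ∑ a ∈ τ, φ (τ.erase a)
  map_add' _ _ := funext fun _ => sum_add_distrib
  map_smul' _ _ := funext fun _ => (mul_sum _ _ _).symm

lemma fullCob_apply (φ : Finset V → ZMod 2) (τ : Finset V) :
    fullCob φ τ = ∑ a ∈ τ, φ (τ.erase a) :=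
  rfl

lemma fullCob_fullCob (φ : Finset V → ZMod 2) : fullCob (fullCob φ) = 0 := by
  ext τ
  simp only [fullCob_apply, sum_sigma', Pi.zero_apply]
  refine sum_involution (fun p _ => ⟨p.2, p.1⟩) ?_ ?_ ?_ ?_
  · rintro ⟨a, b⟩ -
    rw [erase_right_comm]
    exact CharTwo.add_self_eq_zero _
  · rintro ⟨a, b⟩ h - heq
    simp only [mem_sigma, mem_erase] at h
    exact h.2.1 (congrArg Sigma.fst heq)
  · rintro ⟨a, b⟩ h
    simp only [mem_sigma, mem_erase] at h ⊢
    exact ⟨h.2.2, h.2.1.symm, h.1⟩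
  · rintro ⟨a, b⟩ -
    rfl

lemma exists_erase_eq_of_subset {σ τ : Finset V} (h : σ ⊆ τ) (hc : τ.card = σ.card + 1) :
    ∃ a ∈ τ, τ.erase a = σ := by
  obtain ⟨a, haσ, rfl⟩ := (covBy_iff_exists_insert (s := σ) (t := τ)).1
    (covBy_iff_card_sdiff_eq_one.2 ⟨h, by rw [card_sdiff_of_subset h]; omega⟩)
  exact ⟨a, mem_insert_self _ _, erase_insert haσ⟩

lemma fullCob_single {θ ρ : Finset V} (hc : ρ.card = θ.card + 1) :
    fullCob (Pi.single θ 1) ρ = if θ ⊆ ρ then 1 else 0 := by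
  rw [fullCob_apply]
  split_ifs with h
  · obtain ⟨a, ha, rfl⟩ := exists_erase_eq_of_subset h hc
    rw [sum_eq_single_of_mem a ha, Pi.single_eq_same]
    intro b hb hba
    exact Pi.single_eq_of_ne (fun h' => hba (erase_injOn _ hb ha h')) _
  · refine sum_eq_zero fun a _ => Pi.single_eq_of_ne ?_ _
    rintro rfl
    exact h (erase_subset _ _)

lemma cob_eq_fullCob (hX : IsComplex X) (φ : Finset V → ZMod 2) {τ : Finset V}
    (hτ : τ ∈ faces X (k + 1)) : cob X k φ τ = fullCob φ τ := by
  obtain ⟨hτX, hc⟩ := mem_filter.1 hτ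
  have hfacets : (faces X k).filter (fun σ => σ ⊆ τ) = τ.image τ.erase := by
    ext σ
    simp only [faces, mem_filter, mem_image]
    constructor
    · rintro ⟨⟨-, hσ⟩, hs⟩
      exact exists_erase_eq_of_subset hs (by omega)
    · rintro ⟨a, ha, rfl⟩
      have hca := card_erase_of_mem ha
      exact ⟨⟨hX.2 τ hτX _ (erase_subset _ _) (card_pos.1 (by omega)), by omega⟩,
        erase_subset _ _⟩
  rw [cob, hfacets, sum_image (erase_injOn τ), fullCob_apply]

lemma isLeast_cosys (hX : IsComplex X) (k : ℕ) (φ : Finset V → ZMod 2) :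
    IsLeast (Set.range fun ψ => cnorm X k (φ + fullCob ψ)) (cosys X k φ) := by
  rcases k with _ | k
  · have hvertex : ∀ ψ, cnorm X 0 (φ + fullCob ψ) = cnorm X 0 fun σ => ψ ∅ + φ σ := fun ψ =>
      cnorm_congr fun σ hσ => by
        obtain ⟨v, rfl⟩ := card_eq_one.1 (mem_filter.1 hσ).2
        simp [fullCob_apply, add_comm]
    simp only [hvertex, cosys, if_true]
    constructor
    · rcases min_choice (cnorm X 0 φ) (cnorm X 0 fun σ => 1 + φ σ) with h | h <;> rw [h]
      · exact ⟨0, by simp⟩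
      · exact ⟨1, rfl⟩
    · rintro _ ⟨ψ, rfl⟩
      have hcases : ∀ a : ZMod 2, a = 0 ∨ a = 1 := by decide
      rcases hcases (ψ ∅) with h | h <;> simp [h]
  · have hcob : ∀ ψ, (cnorm X (k + 1) fun τ => φ τ + cob X k ψ τ) =
        cnorm X (k + 1) (φ + fullCob ψ) := fun ψ =>
      cnorm_congr fun τ hτ => by rw [cob_eq_fullCob hX ψ hτ, Pi.add_apply]
    have hcosys : cosys X (k + 1) φ = sInf (Set.range fun ψ => cnorm X (k + 1) (φ + fullCob ψ)) :=
      congrArg sInf (Set.ext fun c => exists_congr fun ψ => by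
        rw [Nat.add_sub_cancel, hcob, eq_comm])
    rw [hcosys]
    exact ⟨Nat.sInf_mem (Set.range_nonempty _), fun c hc => Nat.sInf_le hc⟩

lemma cheeger_eq_div {a b : ℕ} (hb : 0 < b)
    (hle : ∀ φ, a * cosys X k φ ≤ b * cnorm X (k + 1) (cob X k φ))
    (hex : ∃ φ, b ≤ cosys X k φ ∧ cnorm X (k + 1) (cob X k φ) ≤ a) :
    cheeger X k = (a : ENNReal) / b := by
  apply le_antisymm
  · obtain ⟨φ, hcosys, hcob⟩ := hex
    refine (sInf_le (by exact ⟨φ, hb.trans_le hcosys, rfl⟩)).trans ?_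
    exact ENNReal.div_le_div (by exact_mod_cast hcob) (by exact_mod_cast hcosys)
  · refine le_sInf ?_
    rintro _ ⟨φ, hφ, rfl⟩
    rw [ENNReal.le_div_iff_mul_le (by simp [hφ.ne']) (by simp), mul_comm, ← mul_div_assoc,
      ENNReal.div_le_iff (by simp [hb.ne']) (by simp), mul_comm, mul_comm (cnorm _ _ _ : ENNReal)]
    exact_mod_cast hle φ

end Cochains

lemma isDershowitzMannaLT_map_symmDiff {ι α : Type*} [DecidableEq ι] [Preorder α] (f : ι → α)
    {s t : Finset ι} {a : ι} (ha : a ∈ s ∩ t) (hlt : ∀ b ∈ t \ s, f b < f a) :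
    Multiset.IsDershowitzMannaLT ((symmDiff s t).val.map f) (s.val.map f) := by
  have hmap : ∀ {u v : Finset ι}, Disjoint u v →
      (u ∪ v).val.map f = u.val.map f + v.val.map f := fun h => by
    rw [← disjUnion_eq_union _ _ h, disjUnion_val, Multiset.map_add]
  refine ⟨(s \ t).val.map f, (t \ s).val.map f, (s ∩ t).val.map f, ?_, ?_, ?_, ?_⟩
  · exact fun h => Multiset.notMem_zero _ (h ▸ Multiset.mem_map_of_mem f ha)
  · exact hmap disjoint_sdiff_sdiff
  · rw [← hmap (disjoint_sdiff_inter s t), sdiff_union_inter]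
  · simp only [Multiset.mem_map]
    rintro _ ⟨b, hb, rfl⟩
    exact ⟨f a, ⟨a, ha, rfl⟩, hlt b hb⟩

namespace sdBoundarySimplex

variable {m : ℕ}

/-! ### Adjacent transpositions and inversions -/

/-- The transposition of the adjacent positions `i` and `i + 1`; `σ * adjSwap i` is the
permutation `σ` with its values at these positions exchanged. -/
def adjSwap (i : Fin m) : Perm (Fin (m + 1)) := swap i.castSucc i.succ

@[simp]
lemma adjSwap_castSucc (i : Fin m) : adjSwap i i.castSucc = i.succ :=
  swap_apply_left _ _

@[simp]
lemma adjSwap_succ (i : Fin m) : adjSwap i i.succ = i.castSucc :=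
  swap_apply_right _ _

lemma mul_adjSwap_mul_adjSwap (σ : Perm (Fin (m + 1))) (i : Fin m) :
    σ * adjSwap i * adjSwap i = σ := by
  simp [adjSwap, mul_assoc]

lemma mul_adjSwap_ne (σ : Perm (Fin (m + 1))) (i : Fin m) : σ * adjSwap i ≠ σ := by
  simp [adjSwap, swap_eq_one_iff, i.castSucc_lt_succ.ne]

lemma symm_mul_adjSwap (σ : Perm (Fin (m + 1))) (i : Fin m) (x : Fin (m + 1)) :
    (σ * adjSwap i).symm x = adjSwap i (σ.symm x) := by
  simp [Equiv.symm_apply_eq, adjSwap]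

lemma adjSwap_le_castSucc_iff {i j : Fin m} (h : j ≠ i) (u : Fin (m + 1)) :
    adjSwap i u ≤ j.castSucc ↔ u ≤ j.castSucc := by
  have : (j : ℕ) ≠ i := fun h' => h (Fin.ext h')
  simp only [adjSwap, swap_apply_def]
  split_ifs with h₁ h₂
  · subst h₁; simp only [Fin.le_def, Fin.val_succ, Fin.val_castSucc]; omega
  · subst h₂; simp only [Fin.le_def, Fin.val_succ, Fin.val_castSucc]; omega
  · rfl

lemma adjSwap_lt_adjSwap_iff {i : Fin m} {u v : Fin (m + 1)} (h : s(u, v) ≠ s(i.castSucc, i.succ)) :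
    adjSwap i u < adjSwap i v ↔ u < v := by
  simp only [ne_eq, Sym2.eq_iff, not_or] at h
  obtain ⟨h₁, h₂⟩ := h
  simp only [adjSwap, swap_apply_def]
  split_ifs <;>
    simp only [Fin.ext_iff, Fin.lt_def, Fin.val_succ, Fin.val_castSucc] at * <;> omega

lemma symm_mul_adjSwap_lt_iff {σ : Perm (Fin (m + 1))} {i : Fin m} {x y : Fin (m + 1)}
    (h : s(x, y) ≠ s(σ i.castSucc, σ i.succ)) :
    (σ * adjSwap i).symm x < (σ * adjSwap i).symm y ↔ σ.symm x < σ.symm y := by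
  rw [symm_mul_adjSwap, symm_mul_adjSwap, adjSwap_lt_adjSwap_iff]
  contrapose! h
  simpa using congrArg (Sym2.map σ) h

lemma eq_of_forall_symm_lt {σ τ : Perm (Fin (m + 1))}
    (h : ∀ i : Fin m, τ.symm (σ i.castSucc) < τ.symm (σ i.succ)) : σ = τ := by
  have hmono : StrictMono (τ.symm ∘ σ) := Fin.strictMono_iff_lt_succ.2 h
  ext1 x
  exact (Equiv.symm_apply_eq _).1 (congrFun hmono.eq_id x)

lemma exists_descent_of_ne {σ τ : Perm (Fin (m + 1))} (h : σ ≠ τ) :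
    ∃ i : Fin m, τ.symm (σ i.succ) < τ.symm (σ i.castSucc) := by
  contrapose! h
  exact eq_of_forall_symm_lt fun i =>
    (h i).lt_of_ne (by simpa using i.castSucc_lt_succ.ne)

lemma exists_ascent_of_symm_lt {ρ σ : Perm (Fin (m + 1))} {x y : Fin (m + 1)}
    (hρ : ρ.symm x < ρ.symm y) (hσ : σ.symm x < σ.symm y) :
    ∃ k : Fin m, σ.symm x ≤ k.castSucc ∧ k.castSucc < σ.symm y ∧
      ρ.symm (σ k.castSucc) < ρ.symm (σ k.succ) := by
  by_contra! hk
  refine hρ.not_ge ?_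
  have hanti : AntitoneOn (ρ.symm ∘ σ) (Set.Icc (σ.symm x) (σ.symm y)) := by
    refine antitoneOn_of_succ_le Set.ordConnected_Icc fun a ha hx hy => ?_
    obtain ⟨k, rfl⟩ : ∃ k : Fin m, k.castSucc = a :=
      Fin.exists_castSucc_eq.2 fun h => ha (h ▸ isMax_top)
    rw [Fin.orderSucc_castSucc] at hy ⊢
    exact hk k hx.1 (k.castSucc_lt_succ.trans_le hy.2)
  simpa using hanti (Set.left_mem_Icc.2 hσ.le) (Set.right_mem_Icc.2 hσ.le) hσ.le

/-- The ordered pairs of values that appear in this order in `σ` and in the opposite order in `τ`.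
Their number is the distance of `σ` and `τ` in the Cayley graph of the adjacent transpositions. -/
def inversions (σ τ : Perm (Fin (m + 1))) : Finset (Fin (m + 1) × Fin (m + 1)) :=
  univ.filter fun p => σ.symm p.1 < σ.symm p.2 ∧ τ.symm p.2 < τ.symm p.1

lemma mem_inversions {σ τ : Perm (Fin (m + 1))} {x y : Fin (m + 1)} :
    (x, y) ∈ inversions σ τ ↔ σ.symm x < σ.symm y ∧ τ.symm y < τ.symm x := by
  simp [inversions]

lemma card_inversions_mul_adjSwap {ρ σ : Perm (Fin (m + 1))} {i : Fin m}
    (h : ρ.symm (σ i.castSucc) < ρ.symm (σ i.succ)) :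
    (inversions ρ (σ * adjSwap i)).card = (inversions ρ σ).card + 1 := by
  have hnotMem : (σ i.castSucc, σ i.succ) ∉ inversions ρ σ := by
    simp [mem_inversions, i.castSucc_lt_succ.le]
  rw [← card_insert_of_notMem hnotMem]
  congr 1
  ext ⟨x, y⟩
  by_cases hxy : s(x, y) = s(σ i.castSucc, σ i.succ)
  · rcases Sym2.eq_iff.1 hxy with ⟨rfl, rfl⟩ | ⟨rfl, rfl⟩
    · simp [mem_inversions, symm_mul_adjSwap, h, i.castSucc_lt_succ]
    · simp [mem_inversions, h.le, i.castSucc_lt_succ.ne']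
  · have hne : (x, y) ≠ (σ i.castSucc, σ i.succ) := fun h' =>
      hxy (congrArg Sym2.mk.uncurry h')
    rw [mem_insert, or_iff_right hne, mem_inversions, mem_inversions,
      symm_mul_adjSwap_lt_iff (Sym2.eq_swap.trans_ne hxy)]

lemma injOn_sym2_inversions (σ τ : Perm (Fin (m + 1))) :
    Set.InjOn Sym2.mk.uncurry (inversions σ τ : Set (Fin (m + 1) × Fin (m + 1))) := by
  rintro ⟨x, y⟩ hxy ⟨x', y'⟩ hxy' h
  rw [mem_coe, mem_inversions] at hxy hxy'
  rcases Sym2.eq_iff.1 h with ⟨rfl, rfl⟩ | ⟨rfl, rfl⟩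
  · rfl
  · exact absurd hxy.1 hxy'.1.not_gt

lemma image_sym2_inversions_subset (σ τ : Perm (Fin (m + 1))) :
    (inversions σ τ).image Sym2.mk.uncurry ⊆ univ.offDiag.image Sym2.mk.uncurry :=
  image_subset_image fun _ hp => mem_offDiag.2 ⟨mem_univ _, mem_univ _, fun h =>
    (mem_filter.1 hp).2.1.ne (congrArg σ.symm h)⟩

lemma card_inversions_le (σ τ : Perm (Fin (m + 1))) :
    (inversions σ τ).card ≤ (m + 1).choose 2 := by
  rw [← card_image_of_injOn (injOn_sym2_inversions σ τ)]
  simpa [Sym2.card_image_offDiag] using card_le_card (image_sym2_inversions_subset σ τ)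

lemma card_inversions_one_revPerm :
    (inversions 1 (Fin.revPerm : Perm (Fin (m + 1)))).card = (m + 1).choose 2 := by
  rw [← card_image_of_injOn (injOn_sym2_inversions _ _),
    (image_sym2_inversions_subset _ _).antisymm, Sym2.card_image_offDiag, card_univ,
    Fintype.card_fin]
  simp only [subset_iff, mem_image, mem_offDiag, Prod.exists]
  rintro _ ⟨x, y, ⟨-, -, hxy⟩, rfl⟩
  rcases lt_or_gt_of_ne hxy with h | h
  · exact ⟨x, y, mem_inversions.2 ⟨h, Fin.rev_lt_rev.2 h⟩, rfl⟩
  · exact ⟨y, x, mem_inversions.2 ⟨h, Fin.rev_lt_rev.2 h⟩, Sym2.eq_swap⟩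

/-- The set of the first `i + 1` values of `σ`. -/
def prefixSet (σ : Perm (Fin (m + 1))) (i : Fin m) : Finset (Fin (m + 1)) :=
  univ.filter fun x => σ.symm x ≤ i.castSucc

lemma mem_prefixSet {σ : Perm (Fin (m + 1))} {i : Fin m} {x : Fin (m + 1)} :
    x ∈ prefixSet σ i ↔ σ.symm x ≤ i.castSucc := by
  simp [prefixSet]

lemma symm_lt_symm_of_mem_prefixSet {σ : Perm (Fin (m + 1))} {i : Fin m} {x y : Fin (m + 1)}
    (hx : x ∈ prefixSet σ i) (hy : y ∉ prefixSet σ i) : σ.symm x < σ.symm y :=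
  (mem_prefixSet.1 hx).trans_lt (not_le.1 (mem_prefixSet.not.1 hy))

lemma prefixSet_mono (σ : Perm (Fin (m + 1))) : Monotone (prefixSet σ) := fun _ _ hij _ hx =>
  mem_prefixSet.2 ((mem_prefixSet.1 hx).trans (Fin.castSucc_le_castSucc_iff.2 hij))

lemma card_prefixSet (σ : Perm (Fin (m + 1))) (i : Fin m) : (prefixSet σ i).card = i + 1 := by
  have : prefixSet σ i = (Iic i.castSucc).map σ.toEmbedding := by
    ext x
    simp [mem_prefixSet, Finset.mem_map_equiv]
  rw [this, card_map, Fin.card_Iic, Fin.val_castSucc]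

lemma eq_of_prefixSet_eq {σ τ : Perm (Fin (m + 1))} {i j : Fin m}
    (h : prefixSet σ i = prefixSet τ j) : i = j := by
  have hcard := congrArg card h
  rw [card_prefixSet, card_prefixSet] at hcard
  exact Fin.ext (by omega)

lemma prefixSet_injective (σ : Perm (Fin (m + 1))) : Function.Injective (prefixSet σ) :=
  fun _ _ => eq_of_prefixSet_eq

lemma prefixSet_mul_adjSwap {σ : Perm (Fin (m + 1))} {i j : Fin m} (h : j ≠ i) :
    prefixSet (σ * adjSwap i) j = prefixSet σ j := by
  ext x
  rw [mem_prefixSet, mem_prefixSet, symm_mul_adjSwap, adjSwap_le_castSucc_iff h]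

lemma symm_lt_symm_of_prefixSet_eq {σ τ : Perm (Fin (m + 1))} {j : Fin m}
    (h : prefixSet τ j = prefixSet σ j) : τ.symm (σ j.castSucc) < τ.symm (σ j.succ) :=
  symm_lt_symm_of_mem_prefixSet (i := j) (by simp [h, mem_prefixSet]) (by simp [h, mem_prefixSet])

lemma eq_or_eq_mul_adjSwap {σ τ : Perm (Fin (m + 1))} {i : Fin m}
    (h : ∀ j ≠ i, prefixSet τ j = prefixSet σ j) : τ = σ ∨ τ = σ * adjSwap i := by
  have hne : τ.symm (σ i.castSucc) ≠ τ.symm (σ i.succ) := by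
    simpa using i.castSucc_lt_succ.ne
  refine hne.lt_or_gt.imp (fun hlt => ?_) (fun hgt => ?_) <;>
    refine (eq_of_forall_symm_lt fun j => ?_).symm <;> rcases eq_or_ne j i with rfl | hj
  · exact hlt
  · exact symm_lt_symm_of_prefixSet_eq (h j hj)
  · simpa using hgt
  · exact symm_lt_symm_of_prefixSet_eq ((h j hj).trans (prefixSet_mul_adjSwap hj).symm)

/-- The prefixes of `σ` at its ascents determine a coset of the subgroup generated by the adjacent
transpositions at its descents, and `σ` is the longest element of that coset. -/
lemma inversions_ssubset_of_prefixSet_eq {ρ σ τ : Perm (Fin (m + 1))} (hne : σ ≠ τ)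
    (h : ∀ k : Fin m, ρ.symm (σ k.castSucc) < ρ.symm (σ k.succ) → prefixSet τ k = prefixSet σ k) :
    inversions ρ τ ⊂ inversions ρ σ := by
  refine (ssubset_iff_of_subset ?_).2 ?_
  · rintro ⟨x, y⟩ hxy
    obtain ⟨hρ, hτ⟩ := mem_inversions.1 hxy
    refine mem_inversions.2 ⟨hρ, not_le.1 fun hle => ?_⟩
    have hσ : σ.symm x < σ.symm y := hle.lt_of_ne (by simpa using ne_of_apply_ne _ hρ.ne)
    obtain ⟨k, hxk, hky, hk⟩ := exists_ascent_of_symm_lt hρ hσ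
    refine hτ.not_gt (symm_lt_symm_of_mem_prefixSet (i := k) ?_ ?_)
    · rwa [h k hk, mem_prefixSet]
    · rwa [h k hk, mem_prefixSet, not_le]
  · obtain ⟨i, hi⟩ := exists_descent_of_ne hne
    have hdesc : ρ.symm (σ i.succ) < ρ.symm (σ i.castSucc) :=
      lt_of_le_of_ne (not_lt.1 fun h' => hi.not_gt (symm_lt_symm_of_prefixSet_eq (h i h')))
        (by simpa using i.castSucc_lt_succ.ne')
    exact ⟨(σ i.succ, σ i.castSucc),
      mem_inversions.2 ⟨hdesc, by simp⟩,
      fun h' => hi.not_gt (mem_inversions.1 h').2⟩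

/-! ### Flags and ridges -/

/-- The maximal chain of prefixes of `σ`; these are the facets of the complex. -/
def flag (σ : Perm (Fin (m + 1))) : Finset (Finset (Fin (m + 1))) := univ.image (prefixSet σ)

/-- The chain of prefixes of `σ` other than the `i`-th; these are the faces of codimension one. -/
def ridge (σ : Perm (Fin (m + 1))) (i : Fin m) : Finset (Finset (Fin (m + 1))) :=
  (univ.erase i).image (prefixSet σ)

lemma card_flag (σ : Perm (Fin (m + 1))) : (flag σ).card = m := by
  rw [flag, card_image_of_injective _ (prefixSet_injective σ), card_univ, Fintype.card_fin]

lemma prefixSet_mem_flag (σ : Perm (Fin (m + 1))) (i : Fin m) : prefixSet σ i ∈ flag σ :=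
  mem_image_of_mem _ (mem_univ i)

lemma flag_erase (σ : Perm (Fin (m + 1))) (i : Fin m) :
    (flag σ).erase (prefixSet σ i) = ridge σ i :=
  (image_erase (prefixSet_injective σ) _ _).symm

lemma card_ridge (σ : Perm (Fin (m + 1))) (i : Fin m) : (ridge σ i).card = m - 1 := by
  rw [← flag_erase, card_erase_of_mem (prefixSet_mem_flag σ i), card_flag]

lemma ridge_subset_flag (σ : Perm (Fin (m + 1))) (i : Fin m) : ridge σ i ⊆ flag σ :=
  image_subset_image (erase_subset _ _)

lemma prefixSet_mem_flag_iff {σ τ : Perm (Fin (m + 1))} {i : Fin m} :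
    prefixSet σ i ∈ flag τ ↔ prefixSet τ i = prefixSet σ i := by
  refine ⟨fun h => ?_, fun h => h ▸ prefixSet_mem_flag τ i⟩
  obtain ⟨j, -, hj⟩ := mem_image.1 h
  rwa [eq_of_prefixSet_eq hj] at hj

lemma prefixSet_mem_ridge_iff {σ : Perm (Fin (m + 1))} {i j : Fin m} :
    prefixSet σ i ∈ ridge σ j ↔ i ≠ j := by
  simp [ridge, (prefixSet_injective σ).eq_iff]

lemma flag_injective : Function.Injective (flag (m := m)) := fun σ _ h =>
  eq_of_forall_symm_lt fun i =>
    symm_lt_symm_of_prefixSet_eq (prefixSet_mem_flag_iff.1 (h ▸ prefixSet_mem_flag σ i))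

lemma ridge_mul_adjSwap (σ : Perm (Fin (m + 1))) (i : Fin m) :
    ridge (σ * adjSwap i) i = ridge σ i :=
  image_congr fun _ hj => prefixSet_mul_adjSwap (ne_of_mem_erase hj)

lemma ridge_subset_flag_iff {σ τ : Perm (Fin (m + 1))} {i : Fin m} :
    ridge σ i ⊆ flag τ ↔ τ = σ ∨ τ = σ * adjSwap i := by
  constructor
  · intro h
    exact eq_or_eq_mul_adjSwap fun j hj =>
      prefixSet_mem_flag_iff.1 (h (prefixSet_mem_ridge_iff.2 hj))
  · rintro (rfl | rfl)
    · exact ridge_subset_flag _ _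
    · exact ridge_mul_adjSwap σ i ▸ ridge_subset_flag _ _

lemma eq_of_ridge_eq {σ τ : Perm (Fin (m + 1))} {i j : Fin m} (h : ridge σ i = ridge τ j) :
    i = j := by
  by_contra hne
  have hi : prefixSet τ i ∈ ridge σ i := h ▸ prefixSet_mem_ridge_iff.2 hne
  have hτσ := prefixSet_mem_flag_iff.1 (ridge_subset_flag σ i hi)
  exact prefixSet_mem_ridge_iff.1 (hτσ ▸ hi) rfl

lemma ridge_eq_iff {σ τ : Perm (Fin (m + 1))} {i j : Fin m} :
    ridge τ j = ridge σ i ↔ j = i ∧ (τ = σ ∨ τ = σ * adjSwap i) := by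
  constructor
  · intro h
    exact ⟨eq_of_ridge_eq h, ridge_subset_flag_iff.1 (h ▸ ridge_subset_flag τ j)⟩
  · rintro ⟨rfl, rfl | rfl⟩
    · rfl
    · exact ridge_mul_adjSwap _ _

/-! ### Faces and coboundaries -/

lemma mem_sdBoundarySimplex {n : ℕ} {v : Finset (Finset (Fin n))} :
    v ∈ sdBoundarySimplex n ↔ v.Nonempty ∧ (∀ A ∈ v, A.Nonempty ∧ A ≠ univ) ∧
      ∀ A ∈ v, ∀ B ∈ v, A ⊆ B ∨ B ⊆ A := by
  simp [sdBoundarySimplex]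

lemma isComplex (n : ℕ) : IsComplex (sdBoundarySimplex n) := by
  refine ⟨fun v hv => (mem_sdBoundarySimplex.1 hv).1, fun v hv w hw hne => ?_⟩
  rw [mem_sdBoundarySimplex] at hv ⊢
  exact ⟨hne, fun A hA => hv.2.1 A (hw hA), fun A hA B hB => hv.2.2 A (hw hA) B (hw hB)⟩

lemma flag_mem (hm : 0 < m) (σ : Perm (Fin (m + 1))) : flag σ ∈ sdBoundarySimplex (m + 1) := by
  refine mem_sdBoundarySimplex.2 ⟨card_pos.1 (by rwa [card_flag]), ?_, ?_⟩ <;>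
    simp only [flag, forall_mem_image]
  · intro i _
    have hcard := card_prefixSet σ i
    refine ⟨card_pos.1 (by omega), fun h => ?_⟩
    rw [h, card_univ, Fintype.card_fin] at hcard
    omega
  · exact fun i _ j _ => (le_total i j).imp (prefixSet_mono σ ·) (prefixSet_mono σ ·)

lemma mem_flag_of_forall_symm_lt {σ : Perm (Fin (m + 1))} {A : Finset (Fin (m + 1))}
    (hne : A.Nonempty) (huniv : A ≠ univ) (h : ∀ x ∈ A, ∀ y ∉ A, σ.symm x < σ.symm y) :
    A ∈ flag σ := by
  obtain ⟨x, hx, hmax⟩ := A.exists_max_image σ.symm hne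
  obtain ⟨y, hy⟩ : ∃ y, y ∉ A := by simpa [eq_univ_iff_forall] using huniv
  obtain ⟨i, hi⟩ := Fin.exists_castSucc_eq.2 (Fin.ne_last_of_lt (h x hx y hy))
  refine mem_image.2 ⟨i, mem_univ i, ?_⟩
  ext z
  rw [mem_prefixSet, hi]
  refine ⟨fun hz => ?_, hmax z⟩
  by_contra hzA
  exact (h x hx z hzA).not_ge hz

lemma exists_subset_flag {v : Finset (Finset (Fin (m + 1)))}
    (hv : v ∈ sdBoundarySimplex (m + 1)) : ∃ σ, v ⊆ flag σ := by
  obtain ⟨-, hproper, hchain⟩ := mem_sdBoundarySimplex.1 hv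
  -- Each member of a chain is an initial segment once `Fin (m + 1)` is sorted by the number of
  -- members that an element avoids.
  let f : Fin (m + 1) → ℕ := fun x => (v.filter fun A => x ∉ A).card
  refine ⟨Tuple.sort f, fun A hA =>
    mem_flag_of_forall_symm_lt (hproper A hA).1 (hproper A hA).2 fun x hx y hy => ?_⟩
  have hf : f x < f y := by
    refine card_lt_card ((ssubset_iff_of_subset fun B hB => ?_).2
      ⟨A, by simp [hA, hy], by simp [hx]⟩)
    obtain ⟨hB, hxB⟩ := mem_filter.1 hB
    have hBA : B ⊆ A := (hchain A hA B hB).resolve_left fun h => hxB (h hx)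
    exact mem_filter.2 ⟨hB, fun h => hy (hBA h)⟩
  by_contra hle
  have hmono := Tuple.monotone_sort f (not_lt.1 hle)
  simp only [Function.comp_apply, apply_symm_apply] at hmono
  exact hf.not_ge hmono

lemma faces_eq_image_flag (k : ℕ) : faces (sdBoundarySimplex (k + 2)) k = univ.image flag := by
  ext v
  simp only [faces, mem_filter, mem_image, mem_univ, true_and]
  constructor
  · rintro ⟨hv, hcard⟩
    obtain ⟨σ, hσ⟩ := exists_subset_flag hv
    exact ⟨σ, (eq_of_subset_of_card_le hσ (by rw [card_flag, hcard])).symm⟩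
  · rintro ⟨σ, rfl⟩
    exact ⟨flag_mem k.succ_pos σ, card_flag σ⟩

lemma mem_faces_iff_exists_ridge {k : ℕ} {v : Finset (Finset (Fin (k + 3)))} :
    v ∈ faces (sdBoundarySimplex (k + 3)) k ↔ ∃ σ i, ridge σ i = v := by
  rw [faces, mem_filter]
  constructor
  · rintro ⟨hv, hcard⟩
    obtain ⟨σ, hσ⟩ := exists_subset_flag hv
    obtain ⟨A, hA, rfl⟩ := exists_erase_eq_of_subset hσ (by rw [card_flag, hcard])
    obtain ⟨i, -, rfl⟩ := mem_image.1 hA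
    exact ⟨σ, i, (flag_erase σ i).symm⟩
  · rintro ⟨σ, i, rfl⟩
    have hcard : (ridge σ i).card = k + 1 := card_ridge σ i
    exact ⟨(isComplex _).2 _ (flag_mem (by omega) σ) _ (ridge_subset_flag σ i)
      (card_pos.1 (by omega)), hcard⟩

/-- The coboundary of a cochain of codimension one, evaluated at the facets. Reading the ridges as
the edges of the Cayley graph of the adjacent transpositions, it marks the permutations of odd
degree in the support. -/
def flagCob : (Finset (Finset (Fin (m + 1))) → ZMod 2) →ₗ[ZMod 2]
    (Perm (Fin (m + 1)) → ZMod 2) :=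
  LinearMap.funLeft (ZMod 2) (ZMod 2) flag ∘ₗ fullCob

lemma flagCob_apply (φ : Finset (Finset (Fin (m + 1))) → ZMod 2) (σ : Perm (Fin (m + 1))) :
    flagCob φ σ = ∑ i, φ (ridge σ i) := by
  rw [flagCob, LinearMap.comp_apply, LinearMap.funLeft_apply, fullCob_apply, flag,
    sum_image (prefixSet_injective σ).injOn]
  exact sum_congr rfl fun i _ => by rw [← flag, flag_erase]

lemma flagCob_fullCob (ψ : Finset (Finset (Fin (m + 1))) → ZMod 2) :
    flagCob (fullCob ψ) = 0 := by
  simp [flagCob, fullCob_fullCob]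

lemma flagCob_single_ridge (σ : Perm (Fin (m + 1))) (i : Fin m) :
    flagCob (Pi.single (ridge σ i) 1) = Pi.single σ 1 + Pi.single (σ * adjSwap i) 1 := by
  ext τ
  rw [flagCob_apply, sum_eq_single_of_mem i (mem_univ i) fun j _ hj =>
    Pi.single_eq_of_ne (fun h => hj (ridge_eq_iff.1 h).1) _]
  simp only [Pi.single_apply, Pi.add_apply, ridge_eq_iff, true_and]
  rcases eq_or_ne τ σ with rfl | h
  · simp [(mul_adjSwap_ne τ i).symm]
  · simp [h]

lemma cnorm_cob_eq_card (k : ℕ) (φ : Finset (Finset (Fin (k + 3))) → ZMod 2) :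
    cnorm (sdBoundarySimplex (k + 3)) (k + 1) (cob (sdBoundarySimplex (k + 3)) k φ) =
      (univ.filter fun σ => flagCob φ σ ≠ 0).card := by
  have hflag : ∀ σ, cob (sdBoundarySimplex (k + 3)) k φ (flag σ) = flagCob φ σ := fun σ =>
    cob_eq_fullCob (isComplex _) φ (faces_eq_image_flag (k + 1) ▸ mem_image_of_mem _ (mem_univ σ))
  rw [cnorm, csupp, faces_eq_image_flag (k + 1), filter_image,
    card_image_of_injective _ flag_injective]
  simp only [hflag]

/-! ### Joining permutations -/

lemma sum_flagCob_eq_zero_of_closed {φ : Finset (Finset (Fin (m + 1))) → ZMod 2}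
    {C : Finset (Perm (Fin (m + 1)))}
    (hC : ∀ σ ∈ C, ∀ i, φ (ridge σ i) ≠ 0 → σ * adjSwap i ∈ C) : ∑ σ ∈ C, flagCob φ σ = 0 := by
  simp only [flagCob_apply]
  rw [← sum_product', ← sum_filter_ne_zero]
  refine sum_involution (fun p _ => (p.1 * adjSwap p.2, p.2)) ?_ ?_ ?_ ?_
  · rintro ⟨σ, i⟩ -
    rw [ridge_mul_adjSwap]
    exact CharTwo.add_self_eq_zero _
  · rintro ⟨σ, i⟩ - - h
    exact mul_adjSwap_ne σ i (congrArg Prod.fst h)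
  · rintro ⟨σ, i⟩ h
    simp only [mem_filter, mem_product, mem_univ, and_true, ridge_mul_adjSwap] at h ⊢
    exact ⟨hC σ h.1 i h.2, h.2⟩
  · rintro ⟨σ, i⟩ -
    simp only [mul_adjSwap_mul_adjSwap]

lemma even_card_flagCob_ne_zero (φ : Finset (Finset (Fin (m + 1))) → ZMod 2) :
    Even (univ.filter fun σ => flagCob φ σ ≠ 0).card := by
  have hone : ∀ a : ZMod 2, (if a ≠ 0 then 1 else 0) = a := by decide
  rw [← ZMod.natCast_eq_zero_iff_even, natCast_card_filter]
  exact (sum_congr rfl fun σ _ => hone _).trans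
    (sum_flagCob_eq_zero_of_closed fun _ _ _ _ => mem_univ _)

lemma exists_flagCob_eq_single_add_single {X : Finset (Finset (Finset (Fin (m + 1))))} {k : ℕ}
    (σ τ : Perm (Fin (m + 1))) :
    ∃ J, flagCob J = Pi.single σ 1 + Pi.single τ 1 ∧ cnorm X k J ≤ (inversions τ σ).card := by
  induction hd : (inversions τ σ).card using Nat.strong_induction_on generalizing σ with
  | _ d ih =>
    rcases eq_or_ne σ τ with rfl | hne
    · exact ⟨0, by rw [map_zero, CharTwo.add_self_eq_zero], by simp⟩
    · obtain ⟨i, hi⟩ := exists_descent_of_ne hne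
      have hcard := card_inversions_mul_adjSwap (ρ := τ) (σ := σ * adjSwap i) (i := i) (by simpa)
      rw [mul_adjSwap_mul_adjSwap, hd] at hcard
      obtain ⟨J, hJ, hle⟩ := ih _ (by omega) (σ * adjSwap i) rfl
      refine ⟨Pi.single (ridge σ i) 1 + J, ?_, (cnorm_add_le _ _).trans ?_⟩
      · rw [map_add, flagCob_single_ridge, hJ, add_assoc, ← add_assoc (Pi.single (σ * adjSwap i) 1),
          CharTwo.add_self_eq_zero, zero_add]
      · have := cnorm_single_le (X := X) (k := k) (ridge σ i)
        omega

lemma exists_flagCob_eq_sum_single {X : Finset (Finset (Finset (Fin (m + 1))))} {k r : ℕ}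
    {T : Finset (Perm (Fin (m + 1)))} (hT : T.card = 2 * r) :
    ∃ J, flagCob J = ∑ σ ∈ T, Pi.single σ 1 ∧ cnorm X k J ≤ r * (m + 1).choose 2 := by
  induction r generalizing T with
  | zero => exact ⟨0, by simp [card_eq_zero.1 hT], by simp⟩
  | succ r ih =>
    obtain ⟨σ, T', hσ, rfl, hT'⟩ := card_eq_succ.1 (show T.card = 2 * r + 1 + 1 by omega)
    obtain ⟨τ, T, hτ, rfl, hr⟩ := card_eq_succ.1 hT'
    obtain ⟨J, hJ, hle⟩ := ih hr
    obtain ⟨J', hJ', hle'⟩ := exists_flagCob_eq_single_add_single (X := X) (k := k) σ τ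
    refine ⟨J' + J, ?_, (cnorm_add_le _ _).trans ?_⟩
    · rw [map_add, hJ, hJ', sum_insert hσ, sum_insert hτ, add_assoc]
    · have := hle'.trans (card_inversions_le τ σ)
      rw [add_mul]
      omega

lemma card_inversions_le_cnorm {k : ℕ} {J : Finset (Finset (Fin (k + 3))) → ZMod 2}
    {σ τ : Perm (Fin (k + 3))} (hJ : flagCob J = Pi.single σ 1 + Pi.single τ 1) :
    (inversions σ τ).card ≤ cnorm (sdBoundarySimplex (k + 3)) k J := by
  refine card_le_card_of_forall_subsingleton
    (fun p v => ∃ υ i, ridge υ i = v ∧ s(p.1, p.2) = s(υ i.castSucc, υ i.succ)) ?_ ?_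
  · rintro ⟨x, y⟩ hxy
    obtain ⟨hσ, hτ⟩ := mem_inversions.1 hxy
    by_contra! hnone
    have hsum := sum_flagCob_eq_zero_of_closed (φ := J)
      (C := univ.filter fun υ => υ.symm x < υ.symm y) fun υ hυ i hi => by
        have hmem : ridge υ i ∈ csupp (sdBoundarySimplex (k + 3)) k J :=
          mem_filter.2 ⟨mem_faces_iff_exists_ridge.2 ⟨υ, i, rfl⟩, hi⟩
        rw [mem_filter, symm_mul_adjSwap_lt_iff (hnone _ hmem υ i rfl)]
        exact ⟨mem_univ _, (mem_filter.1 hυ).2⟩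
    simp [hJ, sum_add_distrib, Pi.single_apply, hσ, hτ.not_gt] at hsum
  · rintro v - p ⟨hp, υ, i, rfl, hpυ⟩ q ⟨hq, υ', j, hridge, hqυ'⟩
    refine injOn_sym2_inversions σ τ hp hq (hpυ.trans (Eq.trans ?_ hqυ'.symm))
    obtain ⟨rfl, rfl | rfl⟩ := ridge_eq_iff.1 hridge
    · rfl
    · simp [Sym2.eq_swap]

/-! ### Vanishing of cohomology -/

/-- The face of `flag σ` of codimension two that omits the `i`-th and the `j`-th prefix. In the
Cayley graph its coboundary is the polygon through `σ` with edges labelled `i` and `j`. -/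
def codimTwoFace (σ : Perm (Fin (m + 1))) (i j : Fin m) : Finset (Finset (Fin (m + 1))) :=
  (ridge σ i).erase (prefixSet σ j)

lemma prefixSet_mem_codimTwoFace_iff {σ : Perm (Fin (m + 1))} {i j k : Fin m} :
    prefixSet σ k ∈ codimTwoFace σ i j ↔ k ≠ i ∧ k ≠ j := by
  rw [codimTwoFace, mem_erase, prefixSet_mem_ridge_iff, (prefixSet_injective σ).ne_iff, and_comm]

lemma codimTwoFace_subset_ridge_iff {σ : Perm (Fin (m + 1))} {i j k : Fin m} :
    codimTwoFace σ i j ⊆ ridge σ k ↔ k = i ∨ k = j := by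
  constructor
  · intro h
    by_contra! hk
    exact prefixSet_mem_ridge_iff.1 (h (prefixSet_mem_codimTwoFace_iff.2 hk)) rfl
  · rintro (rfl | rfl)
    · exact erase_subset _ _
    · rw [codimTwoFace, ← flag_erase, ← flag_erase, erase_right_comm]
      exact erase_subset _ _

lemma card_ridge_eq_card_codimTwoFace_add_one {σ τ : Perm (Fin (m + 1))} {i j k : Fin m}
    (hij : i ≠ j) : (ridge τ k).card = (codimTwoFace σ i j).card + 1 := by
  rw [codimTwoFace, card_erase_add_one (prefixSet_mem_ridge_iff.2 hij.symm), card_ridge, card_ridge]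

lemma card_inversions_lt_of_codimTwoFace_subset {ρ σ τ : Perm (Fin (m + 1))} {i j k : Fin m}
    (hi : ρ.symm (σ i.succ) < ρ.symm (σ i.castSucc))
    (hj : ρ.symm (σ j.succ) < ρ.symm (σ j.castSucc))
    (h : codimTwoFace σ i j ⊆ ridge τ k) (hne : τ ≠ σ) :
    (inversions ρ τ).card < (inversions ρ σ).card := by
  refine card_lt_card (inversions_ssubset_of_prefixSet_eq hne.symm fun l hl => ?_)
  refine prefixSet_mem_flag_iff.1 (ridge_subset_flag τ k (h (prefixSet_mem_codimTwoFace_iff.2 ?_)))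
  constructor <;> rintro rfl
  exacts [hl.not_gt hi, hl.not_gt hj]

/-- The support of a cochain of codimension one, as a set of darts `(σ, i)` of the Cayley graph.
Every ridge in the support occurs twice, once for each of its ends `σ` and `σ * adjSwap i`. -/
def dartSupport (z : Finset (Finset (Fin (m + 1))) → ZMod 2) :
    Finset (Perm (Fin (m + 1)) × Fin m) :=
  univ.filter fun p => z (ridge p.1 p.2) ≠ 0

lemma mem_dartSupport {z : Finset (Finset (Fin (m + 1))) → ZMod 2} {σ : Perm (Fin (m + 1))}
    {i : Fin m} : (σ, i) ∈ dartSupport z ↔ z (ridge σ i) ≠ 0 := by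
  simp [dartSupport]

lemma dartSupport_add_fullCob_single {z : Finset (Finset (Fin (m + 1))) → ZMod 2}
    {θ : Finset (Finset (Fin (m + 1)))}
    (hθ : ∀ (σ : Perm (Fin (m + 1))) i, (ridge σ i).card = θ.card + 1) :
    dartSupport (z + fullCob (Pi.single θ 1)) =
      symmDiff (dartSupport z) (univ.filter fun p => θ ⊆ ridge p.1 p.2) := by
  have hone : ∀ a : ZMod 2, a + 1 ≠ 0 ↔ a = 0 := by decide
  ext ⟨σ, i⟩
  simp only [mem_symmDiff, mem_dartSupport, mem_filter, mem_univ, true_and, Pi.add_apply,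
    fullCob_single (hθ σ i)]
  split_ifs with h <;> simp [h, hone]

/-- The multiset of the distances from `ρ` of the starting points of the darts in the support. -/
def heights (ρ : Perm (Fin (m + 1))) (z : Finset (Finset (Fin (m + 1))) → ZMod 2) : Multiset ℕ :=
  (dartSupport z).val.map fun p => (inversions ρ p.1).card

lemma exists_two_descents_of_flagCob_eq_zero {z : Finset (Finset (Fin (m + 1))) → ZMod 2}
    (hz : flagCob z = 0) (hne : (dartSupport z).Nonempty) (ρ : Perm (Fin (m + 1))) :
    ∃ σ i j, i ≠ j ∧ ((σ, i) ∈ dartSupport z ∧ ρ.symm (σ i.succ) < ρ.symm (σ i.castSucc)) ∧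
      ((σ, j) ∈ dartSupport z ∧ ρ.symm (σ j.succ) < ρ.symm (σ j.castSucc)) := by
  obtain ⟨⟨σ, i⟩, hi, hmax⟩ := exists_max_image _ (fun p => (inversions ρ p.1).card) hne
  have hdesc : ∀ j, (σ, j) ∈ dartSupport z → ρ.symm (σ j.succ) < ρ.symm (σ j.castSucc) := by
    intro j hj
    have hle := hmax (σ * adjSwap j, j)
      (mem_dartSupport.2 (by rw [ridge_mul_adjSwap]; exact mem_dartSupport.1 hj))
    refine lt_of_le_of_ne (not_lt.1 fun hlt => ?_) (by simpa using j.castSucc_lt_succ.ne')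
    exact (Nat.lt_succ_self _).not_ge (card_inversions_mul_adjSwap hlt ▸ hle)
  obtain ⟨j, hij, hj⟩ : ∃ j, i ≠ j ∧ (σ, j) ∈ dartSupport z := by
    by_contra! hall
    have hsum := congrFun hz σ
    rw [flagCob_apply, sum_eq_single_of_mem i (mem_univ i) fun j _ hj =>
      of_not_not (mem_dartSupport.not.1 (hall j hj.symm))] at hsum
    exact mem_dartSupport.1 hi hsum
  exact ⟨σ, i, j, hij, ⟨hi, hdesc i hi⟩, ⟨hj, hdesc j hj⟩⟩

lemma exists_heights_add_fullCob_single_lt {z : Finset (Finset (Fin (m + 1))) → ZMod 2}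
    (hz : flagCob z = 0) (hne : (dartSupport z).Nonempty) (ρ : Perm (Fin (m + 1))) :
    ∃ θ, Multiset.IsDershowitzMannaLT (heights ρ (z + fullCob (Pi.single θ 1))) (heights ρ z) := by
  obtain ⟨σ, i, j, hij, ⟨hi, hdi⟩, ⟨hj, hdj⟩⟩ := exists_two_descents_of_flagCob_eq_zero hz hne ρ
  refine ⟨codimTwoFace σ i j, ?_⟩
  rw [heights, dartSupport_add_fullCob_single
    fun _ _ => card_ridge_eq_card_codimTwoFace_add_one hij]
  refine isDershowitzMannaLT_map_symmDiff _ (a := (σ, i)) (mem_inter.2 ⟨hi, ?_⟩) ?_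
  · exact mem_filter.2 ⟨mem_univ _, codimTwoFace_subset_ridge_iff.2 (.inl rfl)⟩
  · rintro ⟨τ, k⟩ hτ
    obtain ⟨hsub, hnotMem⟩ := mem_sdiff.1 hτ
    replace hsub := (mem_filter.1 hsub).2
    refine card_inversions_lt_of_codimTwoFace_subset hdi hdj hsub ?_
    rintro rfl
    rcases codimTwoFace_subset_ridge_iff.1 hsub with rfl | rfl
    exacts [hnotMem hi, hnotMem hj]

lemma exists_eq_fullCob_of_flagCob_eq_zero {z : Finset (Finset (Fin (m + 1))) → ZMod 2}
    (hz : flagCob z = 0) : ∃ ψ, ∀ σ i, z (ridge σ i) = fullCob ψ (ridge σ i) := by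
  induction z using (InvImage.wf (heights 1)
    (Multiset.wellFounded_isDershowitzMannaLT (α := ℕ))).induction with
  | _ z ih =>
    rcases (dartSupport z).eq_empty_or_nonempty with h | h
    · refine ⟨0, fun σ i => ?_⟩
      have hσ : (σ, i) ∉ dartSupport z := h ▸ notMem_empty _
      simpa [mem_dartSupport] using hσ
    · obtain ⟨θ, hlt⟩ := exists_heights_add_fullCob_single_lt hz h 1
      obtain ⟨ψ, hψ⟩ := ih _ hlt (by rw [map_add, hz, flagCob_fullCob, add_zero])
      refine ⟨ψ + Pi.single θ 1, fun σ i => ?_⟩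
      rw [map_add, Pi.add_apply, ← hψ, Pi.add_apply, add_assoc, CharTwo.add_self_eq_zero, add_zero]

/-! ### The Cheeger constant -/

variable {k : ℕ}

lemma cosys_le_cnorm_of_flagCob_eq {φ φ' : Finset (Finset (Fin (k + 3))) → ZMod 2}
    (h : flagCob φ' = flagCob φ) :
    cosys (sdBoundarySimplex (k + 3)) k φ ≤ cnorm (sdBoundarySimplex (k + 3)) k φ' := by
  obtain ⟨ψ, hψ⟩ := exists_eq_fullCob_of_flagCob_eq_zero (z := φ + φ')
    (by rw [map_add, h, CharTwo.add_self_eq_zero])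
  refine ((isLeast_cosys (isComplex _) k φ).2 ⟨ψ, rfl⟩).trans_eq (cnorm_congr fun v hv => ?_)
  obtain ⟨σ, i, rfl⟩ := mem_faces_iff_exists_ridge.1 hv
  rw [Pi.add_apply, ← hψ, Pi.add_apply, ← add_assoc, CharTwo.add_self_eq_zero, zero_add]

lemma exists_flagCob_eq_cosys_eq_cnorm (φ : Finset (Finset (Fin (k + 3))) → ZMod 2) :
    ∃ φ', flagCob φ' = flagCob φ ∧
      cosys (sdBoundarySimplex (k + 3)) k φ = cnorm (sdBoundarySimplex (k + 3)) k φ' := by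
  obtain ⟨ψ, hψ⟩ := (isLeast_cosys (isComplex (k + 3)) k φ).1
  exact ⟨φ + fullCob ψ, by rw [map_add, flagCob_fullCob, add_zero], hψ.symm⟩

lemma two_mul_cosys_le (φ : Finset (Finset (Fin (k + 3))) → ZMod 2) :
    2 * cosys (sdBoundarySimplex (k + 3)) k φ ≤ (k + 3).choose 2 *
      cnorm (sdBoundarySimplex (k + 3)) (k + 1) (cob (sdBoundarySimplex (k + 3)) k φ) := by
  obtain ⟨r, hr⟩ := (even_card_flagCob_ne_zero φ).two_dvd
  obtain ⟨J, hJ, hle⟩ := exists_flagCob_eq_sum_single (X := sdBoundarySimplex (k + 3)) (k := k) hr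
  have hone : ∀ a : ZMod 2, a ≠ 0 → a = 1 := by decide
  have hJφ : flagCob J = flagCob φ := by
    rw [hJ, sum_filter]
    refine (sum_congr rfl fun σ _ => ?_).trans (univ_sum_single _)
    split_ifs with h
    · rw [hone _ h]
    · rw [not_not.1 h, Pi.single_zero]
  rw [cnorm_cob_eq_card, hr]
  calc 2 * cosys (sdBoundarySimplex (k + 3)) k φ
    _ ≤ 2 * (r * (k + 3).choose 2) :=
      Nat.mul_le_mul_left 2 ((cosys_le_cnorm_of_flagCob_eq hJφ).trans hle)
    _ = (k + 3).choose 2 * (2 * r) := by ring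

lemma exists_choose_le_cosys_and_cnorm_cob_le (k : ℕ) :
    ∃ φ, (k + 3).choose 2 ≤ cosys (sdBoundarySimplex (k + 3)) k φ ∧
      cnorm (sdBoundarySimplex (k + 3)) (k + 1) (cob (sdBoundarySimplex (k + 3)) k φ) ≤ 2 := by
  obtain ⟨φ, hφ, -⟩ := exists_flagCob_eq_single_add_single (X := sdBoundarySimplex (k + 3)) (k := k)
    1 Fin.revPerm
  refine ⟨φ, ?_, ?_⟩
  · obtain ⟨φ', hφ', hcosys⟩ := exists_flagCob_eq_cosys_eq_cnorm φ
    rw [hcosys, ← card_inversions_one_revPerm]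
    exact card_inversions_le_cnorm (hφ'.trans hφ)
  · rw [cnorm_cob_eq_card, hφ]
    refine (card_le_card (t := {1, Fin.revPerm}) fun σ hσ => ?_).trans card_le_two
    by_contra h
    simp only [mem_insert, mem_singleton, not_or] at h
    simp [h.1, h.2] at hσ

lemma cheeger_eq (k : ℕ) :
    cheeger (sdBoundarySimplex (k + 3)) k = 2 / ((k + 3).choose 2 : ENNReal) :=
  cheeger_eq_div (Nat.choose_pos (by omega)) two_mul_cosys_le
    (exists_choose_le_cosys_and_cnorm_cob_le k)

end sdBoundarySimplex

/-- The `(n-3)`-rd Cheeger constant of the barycentric subdivision of the boundary of the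
`(n-1)`-simplex equals `4 / (n(n-1))`. -/
theorem cheeger_sd_boundary_simplex (n : ℕ) (hn : 3 ≤ n) :
    cheeger (sdBoundarySimplex n) (n - 3) =
      4 / ((n : ENNReal) * ((n : ENNReal) - 1)) := by
  obtain ⟨k, rfl⟩ := Nat.exists_eq_add_of_le' hn
  have hchoose : ((k + 3 : ℕ) : ENNReal) * ((k + 3 : ℕ) - 1) = 2 * ((k + 3).choose 2 : ℕ) := by
    have htwo : 2 * (k + 3).choose 2 = (k + 3) * (k + 3 - 1) := by
      rw [Nat.choose_two_right, Nat.mul_div_cancel' (Nat.even_mul_pred_self _).two_dvd]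
    rw [← Nat.cast_one, ← ENNReal.natCast_sub]
    exact_mod_cast htwo.symm
  rw [Nat.add_sub_cancel, sdBoundarySimplex.cheeger_eq, hchoose,
    show (4 : ENNReal) = 2 * 2 by norm_num,
    ENNReal.mul_div_mul_left _ _ (by norm_num) (by norm_num)]
end

section
/- Expansion of the spherical building A_{n−1}(F_q): Let q be a prime power and n ≥ 3, and let A_{n−1}(F_q) be the order complex of the poset of linear subspaces W of F_q^n with 0 < dim W < n, ordered by inclusion. Then h^{n−3}(A_{n−1}(F_q)) ≥ (q+1) / ( (n−1) · Σ_{j=1}^{n−1} j! ). -/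
open Finset

/-!
Let `c` be a family of chains contracting the building below its top dimension. For a cochain `φ`
of codimension one, the cochain `ψ σ = ⟨φ, c σ⟩` satisfies `(φ + dψ) τ = ⟨dφ, c τ⟩`, which bounds
the cosystolic norm of `φ` by the number of times the chains `c τ` meet the support of `dφ`. Apply
this to all translates of `φ` by lattice automorphisms: as these act transitively on the complete
flags, averaging replaces every `c τ` by its number of simplices. Since each panel lies in at least
`q + 1` chambers, the Cheeger constant is at least `(q + 1) / N` when the chains `c τ` attached to
the panels `τ` of any chamber have at most `N` simplices in total.

The contraction is built by induction on the dimension of the ambient space `W`. Fix a line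
`p < W`. Chains are pushed to `p` along `x ≤ x ⊔ p ≥ p`, which stays inside `(⊥, W)` unless the top
element `M` of the chain satisfies `M ⊔ p = W`. By semimodularity such an `M` is a hyperplane, and
then the contraction of `(⊥, M)` is applied first; everything below a proper subspace of `M` can
still be pushed to `p`. The recursion gives
`N = n! - 1 = ∑_{1 ≤ j < n} j · j! ≤ (n - 1) ∑_{1 ≤ j < n} j!`.
-/

namespace BuildingExpansion

section Chains

variable {V : Type*}

/-- Simplicial chains with coefficients in `ℤ/2` on the vertex set `V`. The empty simplex is
allowed, so that `boundary` below is the boundary of the augmented chain complex. -/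
abbrev Chain (V : Type*) : Type _ := Finset V →₀ ZMod 2

theorem Chain.add_self (c : Chain V) : c + c = 0 := by
  ext σ
  exact CharTwo.add_self_eq_zero (c σ)

theorem Chain.add_eq_iff_eq_add {a b c : Chain V} : a + b = c ↔ a = c + b := by
  rw [← eq_sub_iff_add_eq, sub_eq_add_neg, neg_eq_of_add_eq_zero_left b.add_self]

theorem card_support_add_le {α R : Type*} [AddZeroClass R] (a b : α →₀ R) :
    #(a + b).support ≤ #a.support + #b.support := by
  classical
  exact (card_le_card Finsupp.support_add).trans (card_union_le _ _)

theorem card_support_linearCombination_le {α β R : Type*} [Semiring R] (f : α → β →₀ R)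
    (c : α →₀ R) {B : ℕ} (h : ∀ a ∈ c.support, #(f a).support ≤ B) :
    #(Finsupp.linearCombination R f c).support ≤ #c.support * B := by
  classical
  refine (card_le_card ?_).trans (card_biUnion_le_card_mul c.support (fun a => (f a).support) B h)
  rw [Finsupp.linearCombination_apply]
  exact Finsupp.support_finsetSum.trans (biUnion_mono fun a _ => Finsupp.support_smul)

variable [DecidableEq V]

/-- The boundary map of the augmented chain complex of the full simplex on `V`. -/
noncomputable def boundary : Chain V →ₗ[ZMod 2] Chain V :=
  Finsupp.linearCombination (ZMod 2) fun σ => ∑ x ∈ σ, Finsupp.single (σ.erase x) 1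

/-- The join of a chain with the vertex `x`; simplices already containing `x` are sent to `0`. -/
noncomputable def cone (x : V) : Chain V →ₗ[ZMod 2] Chain V :=
  Finsupp.linearCombination (ZMod 2) fun σ =>
    if x ∈ σ then 0 else Finsupp.single (insert x σ) 1

theorem boundary_single (σ : Finset V) :
    boundary (Finsupp.single σ 1) = ∑ x ∈ σ, Finsupp.single (σ.erase x) (1 : ZMod 2) := by
  simp [boundary]

theorem cone_single_of_mem {x : V} {σ : Finset V} (h : x ∈ σ) :
    cone x (Finsupp.single σ 1) = 0 := by
  simp [cone, h]

theorem cone_single_of_notMem {x : V} {σ : Finset V} (h : x ∉ σ) :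
    cone x (Finsupp.single σ 1) = Finsupp.single (insert x σ) (1 : ZMod 2) := by
  simp [cone, h]

theorem card_support_cone_le (x : V) (c : Chain V) : #(cone x c).support ≤ #c.support := by
  refine (card_support_linearCombination_le _ c fun σ _ => ?_).trans (mul_one _).le
  split_ifs
  · simp
  · exact (card_le_card Finsupp.support_single_subset).trans (card_singleton _).le

theorem sum_erase_insert {M : Type*} [AddCommMonoid M] (f : Finset V → M) {x : V}
    {σ : Finset V} (h : x ∉ σ) :
    ∑ y ∈ insert x σ, f ((insert x σ).erase y) = f σ + ∑ y ∈ σ, f (insert x (σ.erase y)) := by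
  rw [sum_insert h, erase_insert h]
  congr 1
  refine sum_congr rfl fun y hy => ?_
  rw [erase_insert_of_ne (ne_of_mem_of_not_mem hy h).symm]

theorem boundary_cone (x : V) (c : Chain V) :
    boundary (cone x c) = c + cone x (boundary c) := by
  suffices boundary ∘ₗ cone x = LinearMap.id + cone x ∘ₗ boundary from LinearMap.congr_fun this c
  ext1 σ
  ext1
  simp only [LinearMap.comp_apply, Finsupp.lsingle_apply, LinearMap.add_apply, LinearMap.id_apply,
    boundary_single, map_sum]
  by_cases hx : x ∈ σ
  · rw [cone_single_of_mem hx, map_zero, sum_eq_single_of_mem x hx fun y _ hy =>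
      cone_single_of_mem (mem_erase.2 ⟨hy.symm, hx⟩), cone_single_of_notMem (notMem_erase x σ),
      insert_erase hx, Chain.add_self]
  · rw [cone_single_of_notMem hx, boundary_single,
      sum_erase_insert (fun ρ => Finsupp.single ρ (1 : ZMod 2)) hx]
    congr 1
    exact sum_congr rfl fun y _ => (cone_single_of_notMem (mt mem_of_mem_erase hx)).symm

theorem linearCombination_boundary {M : Type*} [AddCommGroup M] [Module (ZMod 2) M]
    (f : Finset V → M) (c : Chain V) :
    Finsupp.linearCombination (ZMod 2) f (boundary c) =
      Finsupp.linearCombination (ZMod 2) (fun σ => ∑ x ∈ σ, f (σ.erase x)) c := by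
  suffices Finsupp.linearCombination (ZMod 2) f ∘ₗ boundary =
      Finsupp.linearCombination (ZMod 2) (fun σ => ∑ x ∈ σ, f (σ.erase x)) from
    LinearMap.congr_fun this c
  ext1 σ
  ext1
  simp [boundary_single]

end Chains

section Cosystoles

variable {V : Type*} {X : Finset (Finset V)} {k : ℕ}

theorem cnorm_congr {φ φ' : Finset V → ZMod 2} (h : ∀ τ ∈ faces X k, φ τ = φ' τ) :
    cnorm X k φ = cnorm X k φ' :=
  congr_arg card (filter_congr fun τ hτ => by rw [h τ hτ])

variable [DecidableEq V]

theorem sum_faces_subset (hX : IsComplex X) {τ : Finset V} (hτ : τ ∈ faces X (k + 1))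
    {M : Type*} [AddCommMonoid M] (f : Finset V → M) :
    ∑ σ ∈ faces X k with σ ⊆ τ, f σ = ∑ x ∈ τ, f (τ.erase x) := by
  obtain ⟨hτX, hτcard⟩ := mem_filter.1 hτ
  rw [← sum_image (erase_injOn τ)]
  refine sum_congr ?_ fun _ _ => rfl
  ext σ
  simp only [faces, mem_filter, mem_image]
  constructor
  · rintro ⟨⟨-, hσcard⟩, hστ⟩
    obtain ⟨x, hx⟩ : ∃ x, τ \ σ = {x} := by
      rw [← card_eq_one, card_sdiff_of_subset hστ]
      omega
    exact ⟨x, sdiff_subset (hx ▸ mem_singleton_self x), by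
      rw [erase_eq, ← hx, Finset.sdiff_sdiff_eq_self hστ]⟩
  · rintro ⟨x, hx, rfl⟩
    have hcard : #(τ.erase x) = k + 1 := by rw [card_erase_of_mem hx, hτcard, Nat.add_sub_cancel]
    exact ⟨⟨hX.2 τ hτX _ (erase_subset x τ) (card_pos.1 (by omega)), hcard⟩, erase_subset x τ⟩

theorem cob_of_mem_faces (hX : IsComplex X) (φ : Finset V → ZMod 2) {τ : Finset V}
    (hτ : τ ∈ faces X (k + 1)) : cob X k φ τ = ∑ x ∈ τ, φ (τ.erase x) :=
  sum_faces_subset hX hτ φ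

theorem cosys_le_cnorm (hX : IsComplex X) (φ ψ : Finset V → ZMod 2) :
    cosys X k φ ≤ cnorm X k fun τ => φ τ + ∑ x ∈ τ, ψ (τ.erase x) := by
  rcases k with _ | k
  · have hconst : ∀ τ ∈ faces X 0, φ τ + ∑ x ∈ τ, ψ (τ.erase x) = ψ ∅ + φ τ := by
      intro τ hτ
      obtain ⟨x, rfl⟩ := card_eq_one.1 (mem_filter.1 hτ).2
      simp [add_comm]
    rw [cosys, if_pos rfl, cnorm_congr hconst]
    rcases (by decide : ∀ a : ZMod 2, a = 0 ∨ a = 1) (ψ ∅) with h | h <;> simp [h]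
  · rw [cosys, if_neg k.succ_ne_zero]
    refine Nat.sInf_le ⟨ψ, cnorm_congr fun τ hτ => ?_⟩
    rw [Nat.add_sub_cancel, cob_of_mem_faces hX ψ hτ]

theorem div_le_cheeger {m N : ℕ}
    (h : ∀ φ, m * cosys X k φ ≤ N * cnorm X (k + 1) (cob X k φ)) :
    (m : ENNReal) / N ≤ cheeger X k := by
  refine le_sInf ?_
  rintro _ ⟨φ, hφ, rfl⟩
  refine ENNReal.div_le_of_le_mul ?_
  rw [ENNReal.mul_comm_div, ← mul_div_assoc, ENNReal.le_div_iff_mul_le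
    (Or.inl (Nat.cast_ne_zero.2 hφ.ne')) (Or.inl (ENNReal.natCast_ne_top _)),
    mul_comm (cnorm X (k + 1) (cob X k φ) : ENNReal)]
  exact_mod_cast h φ

/-- The family of chains `c` contracts the augmented chain complex of `X` in dimension `k`. -/
structure IsContractionAt (X : Finset (Finset V)) (k : ℕ) (c : Finset V → Chain V) : Prop where
  support_subset : ∀ τ ∈ faces X k, (c τ).support ⊆ faces X (k + 1)
  boundary_add : ∀ τ ∈ faces X k, boundary (c τ) + ∑ x ∈ τ, c (τ.erase x) = Finsupp.single τ 1

-- Pairing `φ` with `∂ (c τ)` shows that `φ τ + ∑ x ∈ τ, ψ (τ.erase x) = ⟨cob φ, c τ⟩` for the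
-- cochain `ψ σ = ⟨φ, c σ⟩`.
theorem IsContractionAt.cosys_le {c : Finset V → Chain V} (hc : IsContractionAt X k c)
    (hX : IsComplex X) (φ : Finset V → ZMod 2) :
    cosys X k φ ≤
      ∑ τ ∈ faces X k, #{ρ ∈ (c τ).support | ρ ∈ csupp X (k + 1) (cob X k φ)} := by
  let pair : Chain V →ₗ[ZMod 2] ZMod 2 := Finsupp.linearCombination (ZMod 2) φ
  refine (cosys_le_cnorm hX φ fun σ => pair (c σ)).trans ?_
  rw [cnorm, csupp, card_filter]
  refine sum_le_sum fun τ hτ => ?_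
  split_ifs with hne
  · have hpair : φ τ + ∑ x ∈ τ, pair (c (τ.erase x)) = pair (boundary (c τ)) := by
      rw [Chain.add_eq_iff_eq_add.1 (hc.boundary_add τ hτ), map_add, map_sum]
      simp [pair]
    rw [hpair, linearCombination_boundary, Finsupp.linearCombination_apply] at hne
    obtain ⟨ρ, hρ, hρne⟩ := exists_ne_zero_of_sum_ne_zero hne
    have hρX := hc.support_subset τ hτ hρ
    refine card_pos.2 ⟨ρ, mem_filter.2 ⟨hρ, mem_filter.2 ⟨hρX, ?_⟩⟩⟩
    rw [cob_of_mem_faces hX φ hρX]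
    exact right_ne_zero_of_smul hρne
  · exact Nat.zero_le _

end Cosystoles

section Averaging

open scoped Pointwise

theorem card_filter_smul_mem {G α : Type*} [Group G] [Fintype G] [MulAction G α] [DecidableEq α]
    {a : α} {S : Finset α} (hS : ∀ b ∈ S, b ∈ MulAction.orbit G a) :
    #{g : G | g • a ∈ S} = #S * #{g : G | g • a = a} := by
  rw [← sum_card_fiberwise_eq_card_filter univ S fun g : G => g • a, sum_const_nat]
  intro b hb
  obtain ⟨h, rfl⟩ := hS b hb
  refine card_equiv (Equiv.mulLeft h⁻¹) fun g => ?_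
  simp [mul_smul, inv_smul_eq_iff]

theorem card_mul_card_filter_smul_mem {G α : Type*} [Group G] [Fintype G] [MulAction G α]
    [DecidableEq α] {a : α} {S Y : Finset α} (hY : ∀ b, b ∈ Y ↔ b ∈ MulAction.orbit G a)
    (hS : S ⊆ Y) : #Y * #{g : G | g • a ∈ S} = Fintype.card G * #S := by
  have hG : Fintype.card G = #Y * #{g : G | g • a = a} := by
    rw [← card_filter_smul_mem fun b hb => (hY b).1 hb, filter_true_of_mem, card_univ]
    exact fun g _ => (hY _).2 (MulAction.mem_orbit a g)
  rw [card_filter_smul_mem fun b hb => (hY b).1 (hS hb), hG]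
  ring

variable {V G : Type*} [DecidableEq V] [Group G] [MulAction G V] {X : Finset (Finset V)} {k : ℕ}

theorem smul_mem_iff_of_forall_smul_mem (hG : ∀ (g : G), ∀ σ ∈ X, g • σ ∈ X) (g : G)
    {σ : Finset V} : g • σ ∈ X ↔ σ ∈ X :=
  ⟨fun h => inv_smul_smul g σ ▸ hG g⁻¹ _ h, hG g σ⟩

theorem smul_mem_faces_iff (hG : ∀ (g : G), ∀ σ ∈ X, g • σ ∈ X) (g : G) {σ : Finset V} :
    g • σ ∈ faces X k ↔ σ ∈ faces X k := by
  simp only [faces, mem_filter, smul_mem_iff_of_forall_smul_mem hG, card_smul_finset]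

theorem cob_comp_smul (hG : ∀ (g : G), ∀ σ ∈ X, g • σ ∈ X) (g : G) (φ : Finset V → ZMod 2)
    (τ : Finset V) : cob X k (fun σ => φ (g • σ)) τ = cob X k φ (g • τ) :=
  sum_equiv (MulAction.toPerm g) (by simp [smul_mem_faces_iff hG]) fun _ _ => rfl

theorem cnorm_comp_smul (hG : ∀ (g : G), ∀ σ ∈ X, g • σ ∈ X) (g : G) (φ : Finset V → ZMod 2) :
    cnorm X k (fun σ => φ (g • σ)) = cnorm X k φ :=
  card_equiv (MulAction.toPerm g) (by simp [csupp, smul_mem_faces_iff hG])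

theorem cosys_le_cosys_comp_smul (hG : ∀ (g : G), ∀ σ ∈ X, g • σ ∈ X) (g : G)
    (φ : Finset V → ZMod 2) : cosys X k φ ≤ cosys X k fun σ => φ (g • σ) := by
  unfold cosys
  split_ifs with hk
  · rw [cnorm_comp_smul hG g φ, cnorm_comp_smul hG g fun σ => 1 + φ σ]
  · refine le_csInf ⟨_, 0, rfl⟩ ?_
    rintro _ ⟨ψ, rfl⟩
    refine Nat.sInf_le ⟨fun σ => ψ (g⁻¹ • σ), ?_⟩
    rw [← cnorm_comp_smul hG g fun τ => φ τ + cob X (k - 1) (fun σ => ψ (g⁻¹ • σ)) τ]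
    simp only [← cob_comp_smul hG g fun σ => ψ (g⁻¹ • σ), inv_smul_smul]

theorem IsContractionAt.card_faces_mul_cosys_le [Finite G] {c : Finset V → Chain V}
    (hc : IsContractionAt X k c) (hX : IsComplex X) (hG : ∀ (g : G), ∀ σ ∈ X, g • σ ∈ X)
    (htrans : ∀ σ ∈ faces X (k + 1), ∀ σ' ∈ faces X (k + 1), ∃ g : G, g • σ = σ')
    (φ : Finset V → ZMod 2) :
    #(faces X (k + 1)) * cosys X k φ ≤
      (∑ τ ∈ faces X k, #(c τ).support) * cnorm X (k + 1) (cob X k φ) := by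
  have := Fintype.ofFinite G
  set S := csupp X (k + 1) (cob X k φ)
  have hcosys (g : G) : cosys X k φ ≤ ∑ τ ∈ faces X k, #{ρ ∈ (c τ).support | g • ρ ∈ S} := by
    refine (cosys_le_cosys_comp_smul hG g φ).trans ((hc.cosys_le hX _).trans_eq ?_)
    simp only [S, csupp, mem_filter, cob_comp_smul hG, smul_mem_faces_iff hG]
  have horbit (τ) (hτ : τ ∈ faces X k) (ρ) (hρ : ρ ∈ (c τ).support) :
      #(faces X (k + 1)) * #{g : G | g • ρ ∈ S} = Fintype.card G * #S := by
    have hρX := hc.support_subset τ hτ hρ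
    refine card_mul_card_filter_smul_mem (fun σ => ⟨htrans ρ hρX σ, ?_⟩) (filter_subset _ _)
    rintro ⟨g, rfl⟩
    exact (smul_mem_faces_iff hG g).2 hρX
  refine Nat.le_of_mul_le_mul_left ?_ (Fintype.card_pos (α := G))
  calc Fintype.card G * (#(faces X (k + 1)) * cosys X k φ)
      = #(faces X (k + 1)) * ∑ _g : G, cosys X k φ := by
        rw [sum_const, card_univ, smul_eq_mul, mul_left_comm]
    _ ≤ #(faces X (k + 1)) * ∑ g : G, ∑ τ ∈ faces X k, #{ρ ∈ (c τ).support | g • ρ ∈ S} :=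
        Nat.mul_le_mul_left _ (sum_le_sum fun g _ => hcosys g)
    _ = ∑ τ ∈ faces X k, ∑ ρ ∈ (c τ).support, #(faces X (k + 1)) * #{g : G | g • ρ ∈ S} := by
        rw [sum_comm, mul_sum]
        refine sum_congr rfl fun τ _ => ?_
        rw [← mul_sum]
        simp only [card_filter]
        rw [sum_comm]
    _ = Fintype.card G * ((∑ τ ∈ faces X k, #(c τ).support) * #S) := by
        rw [sum_congr rfl fun τ hτ => sum_const_nat (horbit τ hτ), ← sum_mul, mul_left_comm]

theorem mul_sum_faces_le (hX : IsComplex X) {m N : ℕ} (f : Finset V → ℕ)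
    (hm : ∀ τ ∈ faces X k, m ≤ #{σ ∈ faces X (k + 1) | τ ⊆ σ})
    (hN : ∀ σ ∈ faces X (k + 1), ∑ x ∈ σ, f (σ.erase x) ≤ N) :
    m * ∑ τ ∈ faces X k, f τ ≤ #(faces X (k + 1)) * N :=
  calc m * ∑ τ ∈ faces X k, f τ
      ≤ ∑ τ ∈ faces X k, ∑ σ ∈ faces X (k + 1) with τ ⊆ σ, f τ := by
        rw [mul_sum]
        refine sum_le_sum fun τ hτ => ?_
        rw [sum_const, smul_eq_mul]
        exact Nat.mul_le_mul_right _ (hm τ hτ)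
    _ = ∑ σ ∈ faces X (k + 1), ∑ τ ∈ faces X k with τ ⊆ σ, f τ := by
        simp only [sum_filter]
        exact sum_comm
    _ ≤ #(faces X (k + 1)) * N := by
        rw [← smul_eq_mul]
        refine sum_le_card_nsmul _ _ _ fun σ hσ => ?_
        rw [sum_faces_subset hX hσ f]
        exact hN σ hσ

theorem IsContractionAt.div_le_cheeger [Finite G] {c : Finset V → Chain V}
    (hc : IsContractionAt X k c) (hX : IsComplex X) (hG : ∀ (g : G), ∀ σ ∈ X, g • σ ∈ X)
    (htrans : ∀ σ ∈ faces X (k + 1), ∀ σ' ∈ faces X (k + 1), ∃ g : G, g • σ = σ') {m N : ℕ}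
    (hm : ∀ τ ∈ faces X k, m ≤ #{σ ∈ faces X (k + 1) | τ ⊆ σ})
    (hN : ∀ σ ∈ faces X (k + 1), ∑ x ∈ σ, #(c (σ.erase x)).support ≤ N) :
    (m : ENNReal) / N ≤ cheeger X k := by
  refine BuildingExpansion.div_le_cheeger fun φ => ?_
  rcases (faces X (k + 1)).eq_empty_or_nonempty with hempty | hne
  · have hcosys : cosys X k φ = 0 := by
      simpa [csupp, hempty] using hc.cosys_le hX φ
    simp [hcosys]
  · have havg := hc.card_faces_mul_cosys_le hX hG htrans φ
    have hcount := mul_sum_faces_le hX (fun τ => #(c τ).support) hm hN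
    refine Nat.le_of_mul_le_mul_left ?_ (card_pos.2 hne)
    calc #(faces X (k + 1)) * (m * cosys X k φ)
        = m * (#(faces X (k + 1)) * cosys X k φ) := mul_left_comm _ _ _
      _ ≤ m * ((∑ τ ∈ faces X k, #(c τ).support) * cnorm X (k + 1) (cob X k φ)) :=
          Nat.mul_le_mul_left _ havg
      _ ≤ #(faces X (k + 1)) * (N * cnorm X (k + 1) (cob X k φ)) := by
          rw [← mul_assoc, ← mul_assoc]
          exact Nat.mul_le_mul_right _ hcount

end Averaging

section OrderComplex

variable {P : Type*}

/-- `τ` is a finite chain contained in `s`: a possibly empty simplex of the order complex of `s`. -/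
def IsChainIn [LE P] (s : Set P) (τ : Finset P) : Prop :=
  (τ : Set P) ⊆ s ∧ IsChain (· ≤ ·) (τ : Set P)

/-- `X` is the order complex of the subposet `s`. -/
def IsOrderComplex [LE P] (s : Set P) (X : Finset (Finset P)) : Prop :=
  ∀ σ, σ ∈ X ↔ σ.Nonempty ∧ IsChainIn s σ

/-- The chains of the order complex of `s` made of simplices with `m` vertices. -/
noncomputable def orderChains [LE P] (s : Set P) (m : ℕ) : Submodule (ZMod 2) (Chain P) :=
  Finsupp.supported (ZMod 2) (ZMod 2) {τ | IsChainIn s τ ∧ #τ = m}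

section LE

variable [LE P] {s t : Set P} {σ τ : Finset P}

theorem isChainIn_empty (s : Set P) : IsChainIn s ∅ := by
  simp [IsChainIn]

theorem IsChainIn.mono (hτ : IsChainIn s τ) (hst : s ⊆ t) : IsChainIn t τ :=
  ⟨hτ.1.trans hst, hτ.2⟩

theorem IsChainIn.subset (hτ : IsChainIn s τ) (hστ : σ ⊆ τ) : IsChainIn s σ :=
  ⟨(coe_subset.2 hστ).trans hτ.1, hτ.2.mono (coe_subset.2 hστ)⟩

theorem IsOrderComplex.isComplex {X : Finset (Finset P)} (hX : IsOrderComplex s X) :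
    IsComplex X :=
  ⟨fun σ hσ => ((hX σ).1 hσ).1,
    fun σ hσ τ hτσ hτ => (hX τ).2 ⟨hτ, ((hX σ).1 hσ).2.subset hτσ⟩⟩

theorem IsOrderComplex.mem_faces {X : Finset (Finset P)} (hX : IsOrderComplex s X) {k : ℕ} :
    σ ∈ faces X k ↔ IsChainIn s σ ∧ #σ = k + 1 := by
  rw [faces, mem_filter, hX]
  exact ⟨fun h => ⟨h.1.2, h.2⟩, fun h => ⟨⟨card_pos.1 (by omega), h.1⟩, h.2⟩⟩

theorem orderChains_mono (hst : s ⊆ t) (m : ℕ) : orderChains s m ≤ orderChains t m :=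
  Finsupp.supported_mono fun _ hτ => ⟨hτ.1.mono hst, hτ.2⟩

theorem single_mem_orderChains (hτ : IsChainIn s τ) :
    Finsupp.single τ 1 ∈ orderChains s #τ :=
  Finsupp.single_mem_supported _ _ ⟨hτ, rfl⟩

theorem linearCombination_mem_of_mem_orderChains {M : Type*} [AddCommMonoid M]
    [Module (ZMod 2) M] {f : Finset P → M} {S : Submodule (ZMod 2) M} {c : Chain P} {m : ℕ}
    (hc : c ∈ orderChains s m) (hf : ∀ τ, IsChainIn s τ → #τ = m → f τ ∈ S) :
    Finsupp.linearCombination (ZMod 2) f c ∈ S := by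
  rw [Finsupp.linearCombination_apply]
  exact S.sum_mem fun τ hτ => S.smul_mem _ (hf τ (hc hτ).1 (hc hτ).2)

end LE

theorem IsChainIn.insert [Preorder P] [DecidableEq P] {s : Set P} {τ : Finset P}
    (hτ : IsChainIn s τ) {x : P} (hx : x ∈ s) (hτx : ∀ y ∈ τ, y ≤ x ∨ x ≤ y) :
    IsChainIn s (insert x τ) := by
  rw [IsChainIn, coe_insert]
  exact ⟨Set.insert_subset hx hτ.1, hτ.2.insert fun y hy _ => (hτx y hy).symm⟩

theorem cone_mem_orderChains [Preorder P] [DecidableEq P] {s : Set P} {x : P}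
    (hx : x ∈ s) (hsx : ∀ y ∈ s, y ≤ x) {c : Chain P} {m : ℕ} (hc : c ∈ orderChains s m) :
    cone x c ∈ orderChains s (m + 1) := by
  refine linearCombination_mem_of_mem_orderChains hc fun τ hτ hm => ?_
  split_ifs with hxτ
  · exact zero_mem _
  · rw [← hm, ← card_insert_of_notMem hxτ]
    exact single_mem_orderChains (hτ.insert hx fun y hy => Or.inl (hsx y (hτ.1 hy)))

section PartialOrder

variable [PartialOrder P]

theorem exists_eq_insert_of_isChain [DecidableEq P] {τ : Finset P} (hne : τ.Nonempty)
    (hτ : IsChain (· ≤ ·) (τ : Set P)) : ∃ M σ, (∀ x ∈ σ, x < M) ∧ τ = insert M σ := by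
  obtain ⟨M, hM⟩ := τ.exists_maximal hne
  refine ⟨M, τ.erase M, fun x hx => ?_, (insert_erase hM.1).symm⟩
  obtain ⟨hxM, hx⟩ := mem_erase.1 hx
  exact ((hτ.total hx hM.1).elim id (hM.2 hx)).lt_of_ne hxM

theorem isChain_induction [DecidableEq P]
    {motive : ∀ τ : Finset P, IsChain (· ≤ ·) (τ : Set P) → Prop}
    (empty : ∀ h, motive ∅ h)
    (insert : ∀ M (σ : Finset P), (∀ x ∈ σ, x < M) → ∀ (hσ : IsChain (· ≤ ·) (σ : Set P)),
      motive σ hσ → ∀ h, motive (insert M σ) h)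
    (τ : Finset P) (hτ : IsChain (· ≤ ·) (τ : Set P)) : motive τ hτ := by
  induction τ using Finset.strongInduction with
  | H τ ih =>
    rcases τ.eq_empty_or_nonempty with rfl | hne
    · exact empty hτ
    · obtain ⟨M, σ, hM, rfl⟩ := exists_eq_insert_of_isChain hne hτ
      have hσ := hτ.mono (coe_subset.2 (subset_insert M σ))
      exact insert M σ hM hσ (ih σ (ssubset_insert fun h => (hM M h).false) hσ) hτ

theorem IsChainIn.of_insert [OrderBot P] [DecidableEq P] {W M : P} {σ : Finset P}
    (hτ : IsChainIn (Set.Ioo ⊥ W) (Insert.insert M σ)) (hM : ∀ x ∈ σ, x < M) :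
    IsChainIn (Set.Ioo ⊥ M) σ :=
  have hσ := hτ.subset (subset_insert M σ)
  ⟨fun x hx => ⟨(hσ.1 hx).1, hM x hx⟩, hσ.2⟩

theorem exists_gap_of_isChainIn [OrderBot P] [GradeMinOrder ℕ P] {W : P} {τ : Finset P}
    (hτ : IsChainIn (Set.Ioo ⊥ W) τ) (hcard : #τ + 1 < grade ℕ W) :
    ∃ B T : P, B < T ∧ grade ℕ B + 2 ≤ grade ℕ T ∧ T ≤ W ∧ ∀ x ∈ τ, x ≤ B ∨ T ≤ x := by
  classical
  induction τ, hτ.2 using isChain_induction generalizing W with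
  | empty =>
    have hbot : grade ℕ (⊥ : P) = 0 := grade_bot
    rw [card_empty] at hcard
    exact ⟨⊥, W, bot_lt_iff_ne_bot.2 (by rintro rfl; omega), by omega, le_rfl, by simp⟩
  | insert M σ hM _ ih _ =>
    rw [card_insert_of_notMem fun h => (hM M h).false] at hcard
    have hMW := (hτ.1 (mem_insert_self M σ)).2
    by_cases hgap : #σ + 1 < grade ℕ M
    · obtain ⟨B, T, hBT, hgrade, hTM, hσ⟩ := ih (hτ.of_insert hM) hgap
      exact ⟨B, T, hBT, hgrade, hTM.trans hMW.le, forall_mem_insert _ _ _ |>.2 ⟨Or.inr hTM, hσ⟩⟩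
    · exact ⟨M, W, hMW, by omega, le_rfl,
        forall_mem_insert _ _ _ |>.2 ⟨Or.inl le_rfl, fun x hx => Or.inl (hM x hx).le⟩⟩

end PartialOrder

theorem IsOrderComplex.le_card_faces_superset [PartialOrder P] [BoundedOrder P]
    [GradeMinOrder ℕ P] [Finite P] [DecidableEq P] {X : Finset (Finset P)}
    (hX : IsOrderComplex (Set.Ioo ⊥ ⊤) X) {m k : ℕ} (hk : k + 2 < grade ℕ (⊤ : P))
    (hm : ∀ B T : P, B < T → grade ℕ B + 2 ≤ grade ℕ T → m ≤ (Set.Ioo B T).ncard)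
    {τ : Finset P} (hτ : τ ∈ faces X k) : m ≤ #{σ ∈ faces X (k + 1) | τ ⊆ σ} := by
  obtain ⟨hchain, hcard⟩ := hX.mem_faces.1 hτ
  obtain ⟨B, T, hBT, hgrade, -, hgap⟩ := exists_gap_of_isChainIn hchain (by omega)
  have hnot (x) (hx : x ∈ Set.Ioo B T) : x ∉ τ := fun hxτ =>
    (hgap x hxτ).elim hx.1.not_ge hx.2.not_ge
  refine (hm B T hBT hgrade).trans ?_
  rw [← Set.ncard_coe_finset]
  refine Set.ncard_le_ncard_of_injOn (fun x => insert x τ) (fun x hx => ?_)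
    (fun x hx y _ hxy => ?_) (Finset.finite_toSet _)
  · refine mem_coe.2 (mem_filter.2 ⟨hX.mem_faces.2 ⟨hchain.insert ?_ fun y hy => ?_, ?_⟩,
      subset_insert x τ⟩)
    · exact ⟨bot_le.trans_lt hx.1, hx.2.trans_le le_top⟩
    · exact (hgap y hy).imp (le_trans · hx.1.le) hx.2.le.trans
    · rw [card_insert_of_notMem (hnot x hx), hcard]
  · have hxmem : x ∈ insert y τ := (show insert x τ = insert y τ from hxy) ▸ mem_insert_self x τ
    exact (mem_insert.1 hxmem).resolve_right (hnot x hx)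

end OrderComplex

section Prism

variable {L : Type*} [SemilatticeSup L] [OrderBot L] [DecidableEq L]

theorem sup_id_insert_of_lt {M : L} {τ : Finset L} (hM : ∀ x ∈ τ, x < M) :
    (insert M τ).sup id = M := by
  rw [sup_insert, id_eq, sup_eq_left]
  exact Finset.sup_le fun x hx => (hM x hx).le

/-- The prism operator of the homotopy `x ≤ x ⊔ p ≥ p`, which contracts chains to the vertex `p`:
`{x₁ < ⋯ < xₘ}` is sent to the sum over `i` of `{x₁, …, xᵢ, xᵢ ⊔ p, …, xₘ ⊔ p}`, with `x₀ = ⊥`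
left out of the simplices and degenerate simplices discarded. It is built by recursion on the
largest element `xₘ`, and only meaningful on chains. -/
noncomputable def prism (p : L) (τ : Finset L) : Chain L :=
  if h : τ.sup id ∈ τ then
    cone (τ.sup id ⊔ p) (Finsupp.single τ 1 + prism p (τ.erase (τ.sup id)))
  else Finsupp.single {p} 1
termination_by #τ
decreasing_by exact card_erase_lt_of_mem h

theorem prism_empty (p : L) : prism p ∅ = Finsupp.single {p} 1 := by
  rw [prism, dif_neg (notMem_empty _)]

theorem prism_insert (p : L) {M : L} {τ : Finset L} (hM : ∀ x ∈ τ, x < M) :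
    prism p (insert M τ) = cone (M ⊔ p) (Finsupp.single (insert M τ) 1 + prism p τ) := by
  rw [prism, sup_id_insert_of_lt hM, dif_pos (mem_insert_self M τ),
    erase_insert fun h => (hM M h).false]

theorem prism_mem_orderChains {p M : L} (hp : p ≠ ⊥) {τ : Finset L}
    (hτ : IsChainIn (Set.Ioc ⊥ M) τ) :
    prism p τ ∈ orderChains (Set.Ioc ⊥ (M ⊔ p)) (#τ + 1) := by
  induction τ, hτ.2 using isChain_induction generalizing M with
  | empty =>
    rw [prism_empty]
    refine single_mem_orderChains ((isChainIn_empty _).insert ⟨bot_lt_iff_ne_bot.2 hp, ?_⟩ ?_)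
    · exact le_sup_right
    · simp
  | insert N σ hN _ ih _ =>
    have hNM := hτ.1 (mem_insert_self N σ)
    have hbelow : IsChainIn (Set.Ioc ⊥ N) (insert N σ) :=
      ⟨fun x hx => ⟨(hτ.1 hx).1, (mem_insert.1 hx).elim Eq.le fun hx => (hN x hx).le⟩, hτ.2⟩
    have hsub : Set.Ioc ⊥ N ⊆ Set.Ioc ⊥ (N ⊔ p) := Set.Ioc_subset_Ioc_right le_sup_left
    rw [prism_insert p hN]
    refine orderChains_mono (Set.Ioc_subset_Ioc_right (sup_le_sup_right hNM.2 p)) _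
      (cone_mem_orderChains (s := Set.Ioc ⊥ (N ⊔ p)) ⟨hNM.1.trans_le le_sup_left, le_rfl⟩
        (fun y hy => hy.2) ?_)
    refine add_mem (single_mem_orderChains (hbelow.mono hsub)) ?_
    rw [card_insert_of_notMem fun h => (hN N h).false]
    exact ih (hbelow.subset (subset_insert N σ))

theorem boundary_prism (p : L) {τ : Finset L} (hτ : IsChain (· ≤ ·) (τ : Set L)) :
    boundary (prism p τ) + ∑ x ∈ τ, prism p (τ.erase x) = Finsupp.single τ 1 := by
  induction τ, hτ using isChain_induction with
  | empty => simp [prism_empty, boundary_single]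
  | insert M τ hM _ ih _ =>
    have hMτ : M ∉ τ := fun h => (hM M h).false
    set faceSum : Chain L := ∑ x ∈ τ, Finsupp.single (insert M (τ.erase x)) 1
    set prismSum : Chain L := ∑ x ∈ τ, prism p (τ.erase x)
    have hfaces : ∑ x ∈ τ, prism p (insert M (τ.erase x)) = cone (M ⊔ p) (faceSum + prismSum) := by
      rw [← sum_add_distrib, map_sum]
      exact sum_congr rfl fun x _ => prism_insert p fun y hy => hM y (mem_of_mem_erase hy)
    have hboundary : boundary (Finsupp.single (insert M τ) 1) = Finsupp.single τ 1 + faceSum := by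
      rw [boundary_single, sum_erase_insert (fun ρ => Finsupp.single ρ (1 : ZMod 2)) hMτ]
    rw [sum_erase_insert (prism p) hMτ, hfaces, prism_insert p hM, boundary_cone, map_add boundary,
      hboundary, Chain.add_eq_iff_eq_add.1 ih]
    simp only [map_add]
    linear_combination (norm := module) (prism p τ).add_self +
      (cone (M ⊔ p) (Finsupp.single τ 1)).add_self + (cone (M ⊔ p) faceSum).add_self +
      (cone (M ⊔ p) prismSum).add_self

theorem boundary_linearCombination_prism (p : L) {s : Set L} {m : ℕ} {c : Chain L}
    (hc : c ∈ orderChains s m) :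
    boundary (Finsupp.linearCombination (ZMod 2) (prism p) c) +
      Finsupp.linearCombination (ZMod 2) (prism p) (boundary c) = c := by
  let A := Finsupp.linearCombination (ZMod 2) (prism p)
  rw [orderChains, Finsupp.supported_eq_span_single] at hc
  refine LinearMap.eqOn_span (f := boundary ∘ₗ A + A ∘ₗ boundary) (g := LinearMap.id) ?_ hc
  rintro _ ⟨τ, hτ, rfl⟩
  simpa [A, boundary_single] using boundary_prism p hτ.1.2

theorem card_support_prism_le (p : L) {τ : Finset L} (hτ : IsChain (· ≤ ·) (τ : Set L)) :
    #(prism p τ).support ≤ #τ + 1 := by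
  have hsingle (σ : Finset L) : #(Finsupp.single σ (1 : ZMod 2)).support ≤ 1 :=
    (card_le_card Finsupp.support_single_subset).trans (card_singleton σ).le
  induction τ, hτ using isChain_induction with
  | empty => exact prism_empty p ▸ hsingle {p}
  | insert M τ hM _ ih _ =>
    rw [prism_insert p hM, card_insert_of_notMem fun h => (hM M h).false, add_comm (#τ + 1)]
    exact (card_support_cone_le _ _).trans
      ((card_support_add_le _ _).trans (add_le_add (hsingle _) ih))

end Prism

section Contraction

variable {L : Type*} [Lattice L] [OrderBot L]

theorem covBy_of_isAtom_of_sup_eq [IsUpperModularLattice L] {W p M : L} (hp : IsAtom p)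
    (hMW : M < W) (hsup : M ⊔ p = W) : M ⋖ W := by
  have hpM : ¬ p ≤ M := fun h => hMW.ne (sup_eq_left.2 h ▸ hsup)
  have hinf : p ⊓ M ⋖ p := (hp.not_le_iff_disjoint.1 hpM).eq_bot ▸ hp.bot_covBy
  rw [← hsup, sup_comm]
  exact covBy_sup_of_inf_covBy_left hinf

theorem sup_lt_of_lt_of_lt [IsUpperModularLattice L] {W p x M : L} (hp : IsAtom p) (hpW : p < W)
    (hxM : x < M) (hMW : M < W) : x ⊔ p < W :=
  (sup_le (hxM.trans hMW).le hpW.le).lt_of_ne fun hsup =>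
    (covBy_of_isAtom_of_sup_eq hp (hxM.trans hMW) hsup).2 hxM hMW

theorem sup_id_lt_of_isChainIn {M : L} (hM : ⊥ < M) {τ : Finset L}
    (hτ : IsChainIn (Set.Ioo ⊥ M) τ) : τ.sup id < M := by
  classical
  rcases τ.eq_empty_or_nonempty with rfl | hne
  · simpa using hM
  · obtain ⟨N, σ, hN, rfl⟩ := exists_eq_insert_of_isChain hne hτ.2
    rw [sup_id_insert_of_lt hN]
    exact (hτ.1 (mem_insert_self N σ)).2

theorem grade_add_one_eq_of_covBy {P : Type*} [Preorder P] [GradeOrder ℕ P] {a b : P}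
    (h : a ⋖ b) : grade ℕ a + 1 = grade ℕ b :=
  Order.covBy_iff_add_one_eq.1 (h.grade ℕ)

theorem mul_self_add_one_le_factorial (n : ℕ) : n * n + 1 ≤ (n + 1).factorial := by
  induction n with
  | zero => simp
  | succ n ih =>
    rw [Nat.factorial_succ]
    nlinarith

variable [DecidableEq L]

/-- The contraction of `(⊥, W)` built from an atom `p < W` and contractions `d M` of `(⊥, M)`:
a chain whose top `M` satisfies `M ⊔ p < W` is contracted to `p` by the prism operator. If
`M ⊔ p = W`, the prism would hit `W`; the rest of the chain is then first contracted by `d M`,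
inside `(⊥, M)`. -/
noncomputable def extend (W p : L) (d : L → Finset L → Chain L) (τ : Finset L) : Chain L :=
  if τ.sup id ⊔ p = W then
    cone (τ.sup id) (d (τ.sup id) (τ.erase (τ.sup id))) +
      Finsupp.linearCombination (ZMod 2) (prism p) (d (τ.sup id) (τ.erase (τ.sup id)))
  else prism p τ

variable {W p : L} {d : L → Finset L → Chain L}

theorem extend_insert {M : L} {τ : Finset L} (hM : ∀ x ∈ τ, x < M) (hMp : M ⊔ p = W) :
    extend W p d (insert M τ) =
      cone M (d M τ) + Finsupp.linearCombination (ZMod 2) (prism p) (d M τ) := by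
  rw [extend, sup_id_insert_of_lt hM, if_pos hMp, erase_insert fun h => (hM M h).false]

theorem extend_eq_prism {τ : Finset L} (hτ : τ.sup id ⊔ p < W) :
    extend W p d τ = prism p τ := by
  rw [extend, if_neg hτ.ne]

theorem extend_erase_eq_prism {τ : Finset L} (hτ : τ.sup id ⊔ p < W) (x : L) :
    extend W p d (τ.erase x) = prism p (τ.erase x) :=
  extend_eq_prism ((sup_le_sup_right (sup_mono (erase_subset x τ)) p).trans_lt hτ)

theorem extend_insert_erase {M : L} {τ : Finset L} (hM : ∀ x ∈ τ, x < M) (hMp : M ⊔ p = W)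
    (x : L) : extend W p d (insert M (τ.erase x)) = cone M (d M (τ.erase x)) +
      Finsupp.linearCombination (ZMod 2) (prism p) (d M (τ.erase x)) :=
  extend_insert (fun y hy => hM y (mem_of_mem_erase hy)) hMp

theorem sup_id_sup_lt_or_eq_insert (hpW : p < W) {τ : Finset L}
    (hτ : IsChainIn (Set.Ioo ⊥ W) τ) :
    τ.sup id ⊔ p < W ∨ ∃ M ∈ Set.Ioo ⊥ W, M ⊔ p = W ∧
      ∃ σ, (∀ x ∈ σ, x < M) ∧ IsChainIn (Set.Ioo ⊥ M) σ ∧ τ = insert M σ := by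
  rcases τ.eq_empty_or_nonempty with rfl | hne
  · simpa using Or.inl hpW
  · obtain ⟨M, σ, hM, rfl⟩ := exists_eq_insert_of_isChain hne hτ.2
    have hMW := hτ.1 (mem_insert_self M σ)
    rw [sup_id_insert_of_lt hM]
    exact (sup_le hMW.2.le hpW.le).lt_or_eq.imp_right fun hMp =>
      ⟨M, hMW, hMp, σ, hM, hτ.of_insert hM, rfl⟩

theorem prism_mem_orderChains_Ioo (hp : p ≠ ⊥) {τ : Finset L} (hτ : IsChainIn (Set.Ioi ⊥) τ)
    (hsup : τ.sup id ⊔ p < W) : prism p τ ∈ orderChains (Set.Ioo ⊥ W) (#τ + 1) :=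
  have hsub : Set.Ioc ⊥ (τ.sup id ⊔ p) ⊆ Set.Ioo ⊥ W := fun _ hx => ⟨hx.1, hx.2.trans_lt hsup⟩
  orderChains_mono hsub _
    (prism_mem_orderChains hp ⟨fun _ hx => ⟨hτ.1 hx, le_sup (f := id) hx⟩, hτ.2⟩)

variable [GradeOrder ℕ L]

/-- The chains `c τ` contract the order complex of `(⊥, W)` below its top dimension, and the chains
attached to the codimension one faces of a complete chain have in total fewer than `(grade W)!`
simplices. -/
structure IsSmallContraction (W : L) (c : Finset L → Chain L) : Prop where
  mem_orderChains : ∀ τ, IsChainIn (Set.Ioo ⊥ W) τ → #τ + 2 ≤ grade ℕ W →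
    c τ ∈ orderChains (Set.Ioo ⊥ W) (#τ + 1)
  boundary_add : ∀ τ, IsChainIn (Set.Ioo ⊥ W) τ → #τ + 2 ≤ grade ℕ W →
    boundary (c τ) + ∑ x ∈ τ, c (τ.erase x) = Finsupp.single τ 1
  sum_card_lt : ∀ σ, IsChainIn (Set.Ioo ⊥ W) σ → #σ + 1 = grade ℕ W →
    ∑ x ∈ σ, #(c (σ.erase x)).support < (grade ℕ W).factorial

theorem IsSmallContraction.of_grade_le_one {W : L} (hW : grade ℕ W ≤ 1) :
    IsSmallContraction W 0 where
  mem_orderChains _ _ hτ := by omega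
  boundary_add _ _ hτ := by omega
  sum_card_lt σ _ hσ := by
    obtain rfl : σ = ∅ := card_eq_zero.1 (by omega)
    exact Nat.factorial_pos _

theorem card_support_extend_insert_erase_le {M : L} (hMp : M ⊔ p = W)
    (hdM : IsSmallContraction M (d M)) {σ : Finset L} (hM : ∀ x ∈ σ, x < M)
    (hσ : IsChainIn (Set.Ioo ⊥ M) σ) (hcard : #σ + 1 ≤ grade ℕ M) {x : L} (hx : x ∈ σ) :
    #(extend W p d (insert M (σ.erase x))).support ≤
      #(d M (σ.erase x)).support * (#σ + 2) := by
  have herase := card_erase_add_one hx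
  have hmem := hdM.mem_orderChains _ (hσ.subset (erase_subset x σ)) (by omega)
  rw [herase] at hmem
  have hprism := card_support_linearCombination_le (prism p) (d M (σ.erase x)) fun ρ hρ =>
    (card_support_prism_le p (hmem hρ).1.2).trans_eq (congr_arg (· + 1) (hmem hρ).2)
  rw [extend_insert_erase hM hMp]
  calc _ ≤ #(d M (σ.erase x)).support + #(d M (σ.erase x)).support * (#σ + 1) :=
        (card_support_add_le _ _).trans (add_le_add (card_support_cone_le _ _) hprism)
    _ = #(d M (σ.erase x)).support * (#σ + 2) := by ring

variable [IsUpperModularLattice L]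

theorem extend_mem_orderChains (hp : IsAtom p) (hpW : p < W)
    (hd : ∀ M, M ⋖ W → IsSmallContraction M (d M)) {τ : Finset L}
    (hτ : IsChainIn (Set.Ioo ⊥ W) τ) (hcard : #τ + 2 ≤ grade ℕ W) :
    extend W p d τ ∈ orderChains (Set.Ioo ⊥ W) (#τ + 1) := by
  obtain hsup | ⟨M, hMW, hMp, σ, hM, hσ, rfl⟩ := sup_id_sup_lt_or_eq_insert hpW hτ
  · rw [extend_eq_prism hsup]
    exact prism_mem_orderChains_Ioo hp.1 (hτ.mono Set.Ioo_subset_Ioi_self) hsup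
  · have hcov := covBy_of_isAtom_of_sup_eq hp hMW.2 hMp
    have hgrade := grade_add_one_eq_of_covBy hcov
    rw [card_insert_of_notMem fun h => (hM M h).false] at hcard ⊢
    have hdM := (hd M hcov).mem_orderChains σ hσ (by omega)
    rw [extend_insert hM hMp]
    refine add_mem ?_ (linearCombination_mem_of_mem_orderChains hdM fun ρ hρ hρcard => ?_)
    · have hsub : Set.Ioc ⊥ M ⊆ Set.Ioo ⊥ W := fun x hx => ⟨hx.1, hx.2.trans_lt hMW.2⟩
      refine orderChains_mono hsub _
        (cone_mem_orderChains (s := Set.Ioc ⊥ M) ⟨hMW.1, le_rfl⟩ (fun y hy => hy.2) ?_)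
      exact orderChains_mono Set.Ioo_subset_Ioc_self _ hdM
    · rw [← hρcard]
      exact prism_mem_orderChains_Ioo hp.1 (hρ.mono Set.Ioo_subset_Ioi_self)
        (sup_lt_of_lt_of_lt hp hpW (sup_id_lt_of_isChainIn hMW.1 hρ) hMW.2)

theorem boundary_extend_add (hp : IsAtom p) (hpW : p < W)
    (hd : ∀ M, M ⋖ W → IsSmallContraction M (d M)) {τ : Finset L}
    (hτ : IsChainIn (Set.Ioo ⊥ W) τ) (hcard : #τ + 2 ≤ grade ℕ W) :
    boundary (extend W p d τ) + ∑ x ∈ τ, extend W p d (τ.erase x) = Finsupp.single τ 1 := by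
  obtain hsup | ⟨M, hMW, hMp, σ, hM, hσ, rfl⟩ := sup_id_sup_lt_or_eq_insert hpW hτ
  · rw [extend_eq_prism hsup, sum_congr rfl fun x _ => extend_erase_eq_prism hsup x]
    exact boundary_prism p hτ.2
  · have hcov := covBy_of_isAtom_of_sup_eq hp hMW.2 hMp
    have hgrade := grade_add_one_eq_of_covBy hcov
    have hMσ : M ∉ σ := fun h => (hM M h).false
    rw [card_insert_of_notMem hMσ] at hcard
    have hdM := (hd M hcov).mem_orderChains σ hσ (by omega)
    set dSum : Chain L := ∑ x ∈ σ, d M (σ.erase x)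
    set A := Finsupp.linearCombination (ZMod 2) (prism p)
    have hboundary : boundary (d M σ) = Finsupp.single σ 1 + dSum :=
      Chain.add_eq_iff_eq_add.1 ((hd M hcov).boundary_add σ hσ (by omega))
    have hprism : boundary (A (d M σ)) = d M σ + (prism p σ + A dSum) := by
      have h := Chain.add_eq_iff_eq_add.1 (boundary_linearCombination_prism p hdM)
      rwa [hboundary, map_add, Finsupp.linearCombination_single, one_smul] at h
    have hsum : ∑ x ∈ σ, extend W p d (insert M (σ.erase x)) = cone M dSum + A dSum := by
      rw [map_sum, map_sum, ← sum_add_distrib]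
      exact sum_congr rfl fun x _ => extend_insert_erase hM hMp x
    have hσp := sup_lt_of_lt_of_lt hp hpW (sup_id_lt_of_isChainIn hMW.1 hσ) hMW.2
    rw [sum_erase_insert (extend W p d) hMσ, hsum, extend_insert hM hMp, extend_eq_prism hσp,
      map_add boundary, boundary_cone, hboundary, hprism, map_add (cone M),
      cone_single_of_notMem hMσ]
    linear_combination (norm := module) (d M σ).add_self + (cone M dSum).add_self +
      (prism p σ).add_self + (A dSum).add_self

theorem sum_card_support_extend_lt (hp : IsAtom p) (hpW : p < W)
    (hd : ∀ M, M ⋖ W → IsSmallContraction M (d M)) {τ : Finset L}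
    (hτ : IsChainIn (Set.Ioo ⊥ W) τ) (hcard : #τ + 1 = grade ℕ W) :
    ∑ x ∈ τ, #(extend W p d (τ.erase x)).support < (grade ℕ W).factorial := by
  obtain hsup | ⟨M, hMW, hMp, σ, hM, hσ, rfl⟩ := sup_id_sup_lt_or_eq_insert hpW hτ
  · have hle : ∑ x ∈ τ, #(extend W p d (τ.erase x)).support ≤ #τ * #τ := by
      refine sum_le_card_nsmul _ _ _ fun x hx => ?_
      rw [extend_erase_eq_prism hsup x, ← card_erase_add_one hx]
      exact card_support_prism_le p (hτ.subset (erase_subset x τ)).2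
    rw [← hcard]
    exact hle.trans_lt (mul_self_add_one_le_factorial _)
  · have hcov := covBy_of_isAtom_of_sup_eq hp hMW.2 hMp
    have hgrade := grade_add_one_eq_of_covBy hcov
    have hMσ : M ∉ σ := fun h => (hM M h).false
    rw [card_insert_of_notMem hMσ] at hcard
    have hMcard : grade ℕ M = #σ + 1 := by omega
    have hlt := (hd M hcov).sum_card_lt σ hσ hMcard.symm
    have hσp := sup_lt_of_lt_of_lt hp hpW (sup_id_lt_of_isChainIn hMW.1 hσ) hMW.2
    rw [sum_erase_insert (fun ρ => #(extend W p d ρ).support) hMσ, extend_eq_prism hσp, ← hgrade,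
      Nat.factorial_succ, hMcard]
    rw [hMcard] at hlt
    calc #(prism p σ).support + ∑ x ∈ σ, #(extend W p d (insert M (σ.erase x))).support
        ≤ (#σ + 1) + (∑ x ∈ σ, #(d M (σ.erase x)).support) * (#σ + 2) := by
          rw [sum_mul]
          exact add_le_add (card_support_prism_le p hσ.2) (sum_le_sum fun x hx =>
            card_support_extend_insert_erase_le hMp (hd M hcov) hM hσ hMcard.ge hx)
      _ < (∑ x ∈ σ, #(d M (σ.erase x)).support + 1) * (#σ + 2) := by
          rw [add_one_mul]
          omega
      _ ≤ (#σ + 1 + 1) * (#σ + 1).factorial := by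
          rw [mul_comm]
          exact Nat.mul_le_mul_left _ hlt

theorem IsSmallContraction.extend (hp : IsAtom p) (hpW : p < W)
    (hd : ∀ M, M ⋖ W → IsSmallContraction M (d M)) :
    IsSmallContraction W (extend W p d) where
  mem_orderChains _ := extend_mem_orderChains hp hpW hd
  boundary_add _ := boundary_extend_add hp hpW hd
  sum_card_lt _ := sum_card_support_extend_lt hp hpW hd

end Contraction

section Cheeger

theorem IsChainIn.image_orderIso {P : Type*} [PartialOrder P] [BoundedOrder P] [DecidableEq P]
    {σ : Finset P} (hσ : IsChainIn (Set.Ioo ⊥ ⊤) σ) (g : P ≃o P) :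
    IsChainIn (Set.Ioo ⊥ ⊤) (σ.image g) := by
  rw [IsChainIn, coe_image]
  refine ⟨?_, hσ.2.image g⟩
  rintro _ ⟨x, hx, rfl⟩
  exact ⟨g.map_bot ▸ g.strictMono (hσ.1 hx).1, g.map_top ▸ g.strictMono (hσ.1 hx).2⟩

variable {L : Type*} [Lattice L]

theorem IsSmallContraction.isContractionAt [BoundedOrder L] [DecidableEq L] [GradeOrder ℕ L]
    {X : Finset (Finset L)}
    (hX : IsOrderComplex (Set.Ioo ⊥ ⊤) X) {c : Finset L → Chain L} (hc : IsSmallContraction ⊤ c)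
    {k : ℕ} (hk : k + 3 ≤ grade ℕ (⊤ : L)) : IsContractionAt X k c where
  support_subset τ hτ ρ hρ := by
    obtain ⟨hchain, hcard⟩ := hX.mem_faces.1 hτ
    have hmem := hc.mem_orderChains τ hchain (by omega) hρ
    exact hX.mem_faces.2 ⟨hmem.1, by rw [hmem.2, hcard]⟩
  boundary_add τ hτ := by
    obtain ⟨hchain, hcard⟩ := hX.mem_faces.1 hτ
    exact hc.boundary_add τ hchain (by omega)

variable [IsUpperModularLattice L]

theorem exists_isSmallContraction [OrderBot L] [GradeMinOrder ℕ L] [DecidableEq L] (W : L) :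
    ∃ c, IsSmallContraction W c := by
  have : WellFoundedLT L := GradeOrder.wellFoundedLT ℕ
  induction W using WellFoundedLT.induction with
  | ind W ih =>
    by_cases hW : ∃ p, IsAtom p ∧ p < W
    · obtain ⟨p, hp, hpW⟩ := hW
      choose! d hd using ih
      exact ⟨_, .extend hp hpW fun M hMW => hd M hMW.lt⟩
    · refine ⟨0, .of_grade_le_one ?_⟩
      have hbot : grade ℕ (⊥ : L) = 0 := grade_bot
      have : IsAtomic L := isAtomic_of_orderBot_wellFounded_lt wellFounded_lt
      obtain rfl | ⟨p, hp, hpW⟩ := eq_bot_or_exists_atom_le W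
      · omega
      · obtain rfl := hpW.eq_of_not_lt fun h => hW ⟨p, hp, h⟩
        have := grade_add_one_eq_of_covBy hp.bot_covBy
        omega

theorem div_le_cheeger_orderComplex [BoundedOrder L] [DecidableEq L] [GradeMinOrder ℕ L]
    [Finite L] {X : Finset (Finset L)}
    (hX : IsOrderComplex (Set.Ioo ⊥ ⊤) X) (hL : 3 ≤ grade ℕ (⊤ : L))
    (htrans : ∀ σ σ' : Finset L, IsChainIn (Set.Ioo ⊥ ⊤) σ → IsChainIn (Set.Ioo ⊥ ⊤) σ' →
      #σ + 1 = grade ℕ (⊤ : L) → #σ' + 1 = grade ℕ (⊤ : L) → ∃ g : L ≃o L, σ.image g = σ')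
    {m : ℕ} (hm : ∀ B T : L, B < T → grade ℕ B + 2 ≤ grade ℕ T → m ≤ (Set.Ioo B T).ncard) :
    (m : ENNReal) / ((grade ℕ (⊤ : L)).factorial - 1 : ℕ) ≤ cheeger X (grade ℕ (⊤ : L) - 3) := by
  obtain ⟨k, hk⟩ := Nat.exists_eq_add_of_le' hL
  have : Finite (L ≃o L) := DFunLike.finite _
  obtain ⟨c, hc⟩ := exists_isSmallContraction (⊤ : L)
  rw [show grade ℕ (⊤ : L) - 3 = k by omega]
  refine (hc.isContractionAt hX hk.ge).div_le_cheeger (G := L ≃o L) hX.isComplex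
    (fun g σ hσ => ?_) (fun σ hσ σ' hσ' => ?_)
    (fun τ hτ => hX.le_card_faces_superset (by omega) hm hτ) fun σ hσ => ?_
  · obtain ⟨hne, hchain⟩ := (hX σ).1 hσ
    exact (hX _).2 ⟨hne.image _, hchain.image_orderIso g⟩
  · obtain ⟨hchain, hcard⟩ := hX.mem_faces.1 hσ
    obtain ⟨hchain', hcard'⟩ := hX.mem_faces.1 hσ'
    exact htrans σ σ' hchain hchain' (by omega) (by omega)
  · obtain ⟨hchain, hcard⟩ := hX.mem_faces.1 hσ
    exact Nat.le_sub_one_of_lt (hc.sum_card_lt σ hchain (by omega))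

end Cheeger

section CompleteFlags

theorem exists_strictMono_image_eq_of_isChain {P : Type*} [PartialOrder P] [DecidableEq P]
    {C : Finset P} (hC : IsChain (· ≤ ·) (C : Set P)) {n : ℕ} (hcard : #C = n) :
    ∃ w : Fin n → P, StrictMono w ∧ univ.image w = C := by
  classical
  let _ : LinearOrder C := hC.linearOrder
  let e : Fin n ≃o C := monoEquivOfFin C ((Fintype.card_coe C).trans hcard)
  refine ⟨fun i => e i, fun i j hij => e.strictMono hij, ?_⟩
  ext x
  simp only [mem_image, mem_univ, true_and]
  exact ⟨fun ⟨i, hi⟩ => hi ▸ (e i).2, fun hx => ⟨e.symm ⟨x, hx⟩, by simp⟩⟩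

theorem grade_eq_of_strictMono {P : Type*} [PartialOrder P] [OrderTop P] [GradeOrder ℕ P] {n : ℕ}
    (hn : grade ℕ (⊤ : P) = n) {w : Fin (n + 1) → P} (hw : StrictMono w) (i : Fin (n + 1)) :
    grade ℕ (w i) = i := by
  let f (j : Fin (n + 1)) : Fin (n + 1) :=
    ⟨grade ℕ (w j), Nat.lt_succ_of_le (hn ▸ grade_mono le_top)⟩
  have hf : StrictMono f := fun _ _ hij =>
    Fin.mk_lt_mk.2 (grade_strictMono (𝕆 := ℕ) (hw hij))
  exact Fin.coe_orderIso_apply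
    (hf.orderIsoOfSurjective f (Finite.surjective_of_injective hf.injective)) i

theorem IsChainIn.erase_erase_insert_insert {P : Type*} [PartialOrder P] [BoundedOrder P]
    [DecidableEq P] {σ : Finset P} (hσ : IsChainIn (Set.Ioo ⊥ ⊤) σ) :
    ((Insert.insert ⊤ (Insert.insert ⊥ σ)).erase ⊤).erase ⊥ = σ := by
  ext x
  have hx (h : x ∈ σ) : x ≠ ⊥ ∧ x ≠ ⊤ := ⟨(hσ.1 h).1.ne', (hσ.1 h).2.ne⟩
  simp only [mem_erase, mem_insert]
  tauto

end CompleteFlags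

section Subspaces

open Module

variable {F V : Type*} [Field F] [AddCommGroup V] [Module F V]

theorem exists_orderEmbedding_submodule_quotient {B T : Submodule F V} (hBT : B ≤ T) :
    ∃ f : Submodule F (T ⧸ B.submoduleOf T) ↪o Submodule F V, f ⊥ = B ∧ f ⊤ = T := by
  refine ⟨(Submodule.comapMkQOrderEmbedding _).trans (Submodule.MapSubtype.orderEmbedding T),
    ?_, ?_⟩
  · rw [RelEmbedding.trans_apply, Submodule.comapMkQOrderEmbedding_eq, Submodule.comap_bot,
      Submodule.ker_mkQ, Submodule.map_subtype_embedding_eq, Submodule.submoduleOf,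
      Submodule.map_comap_subtype, inf_eq_right.2 hBT]
  · rw [RelEmbedding.trans_apply, Submodule.comapMkQOrderEmbedding_eq, Submodule.comap_top,
      Submodule.map_subtype_embedding_eq, Submodule.map_subtype_top]

theorem card_add_one_le_card_projectivization [Finite F] (h : 2 ≤ finrank F V) :
    Nat.card F + 1 ≤ Nat.card (Projectivization F V) := by
  rw [Projectivization.card_of_finrank F V rfl]
  refine le_trans ?_ (sum_le_sum_of_subset (range_subset_range.2 h))
  simp [sum_range_succ, add_comm]

theorem card_add_one_le_ncard_Ioo [Finite F] [FiniteDimensional F V] {B T : Submodule F V}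
    (hBT : B ≤ T) (h : finrank F B + 2 ≤ finrank F T) :
    Nat.card F + 1 ≤ (Set.Ioo B T).ncard := by
  have : Finite V := Module.finite_of_finite F
  obtain ⟨f, hbot, htop⟩ := exists_orderEmbedding_submodule_quotient hBT
  have hrank : 2 ≤ finrank F (T ⧸ B.submoduleOf T) := by
    have hquot := (B.submoduleOf T).finrank_quotient_add_finrank
    have hB := (Submodule.submoduleOfEquivOfLe hBT).finrank_eq
    omega
  have hmem (x : Projectivization F (T ⧸ B.submoduleOf T)) : f x.submodule ∈ Set.Ioo B T := by
    have hx := x.finrank_submodule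
    refine ⟨hbot.symm.trans_lt (f.strictMono (bot_lt_iff_ne_bot.2 fun heq => ?_)),
      (f.strictMono (lt_top_iff_ne_top.2 fun heq => ?_)).trans_eq htop⟩
    · rw [heq, finrank_bot] at hx
      omega
    · rw [heq, finrank_top] at hx
      omega
  refine (card_add_one_le_card_projectivization hrank).trans
    (Nat.card_le_card_of_injective (fun x => (⟨_, hmem x⟩ : Set.Ioo B T)) fun x y hxy => ?_)
  exact Projectivization.submodule_injective (f.injective (congr_arg Subtype.val hxy))

theorem map_flag_equiv {n : ℕ} (b b' : Basis (Fin n) F V) (k : Fin (n + 1)) :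
    (b.flag k).map (b.equiv b' (Equiv.refl _) : V →ₗ[F] V) = b'.flag k := by
  rw [Basis.flag, Basis.flag, Submodule.map_span, ← Set.image_comp]
  congr 1
  exact Set.image_congr fun i _ => by simp

variable [FiniteDimensional F V]

variable (F V) in
/-- Subspaces of a finite-dimensional vector space are graded by their dimension. -/
noncomputable abbrev submoduleGradeMinOrder : GradeMinOrder ℕ (Submodule F V) where
  grade W := finrank F W
  grade_strictMono _ _ h := Submodule.finrank_lt_finrank_of_lt h
  covBy_grade U W h := by
    obtain ⟨v, hvW, hvU⟩ := SetLike.exists_of_lt h.lt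
    have hU : finrank F U < finrank F W := Submodule.finrank_lt_finrank_of_lt h.lt
    have hsup : (F ∙ v) ⊔ U = W :=
      (h.wcovBy.eq_or_eq le_sup_right
        (sup_le ((Submodule.span_singleton_le_iff_mem v W).2 hvW) h.le)).resolve_left
        fun heq => hvU (heq ▸ Submodule.mem_sup_left (Submodule.mem_span_singleton_self v))
    have hadd := Submodule.finrank_add_le_finrank_add_finrank (F ∙ v) U
    have hv := finrank_span_le_card (R := F) ({v} : Set V)
    rw [hsup] at hadd
    rw [Set.toFinset_singleton, card_singleton] at hv
    exact Order.covBy_iff_add_one_eq.2 (by omega)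
  isMin_grade W hW := by
    rw [hW.eq_bot, finrank_bot]
    exact isMin_bot

attribute [local instance] submoduleGradeMinOrder

theorem finrank_eq_of_strictMono {n : ℕ} (hn : finrank F V = n) {w : Fin (n + 1) → Submodule F V}
    (hw : StrictMono w) (i : Fin (n + 1)) : finrank F (w i) = i :=
  grade_eq_of_strictMono (P := Submodule F V) ((finrank_top F V).trans hn) hw i

theorem exists_basis_flag_eq {n : ℕ} (hn : finrank F V = n) {w : Fin (n + 1) → Submodule F V}
    (hw : StrictMono w) : ∃ b : Basis (Fin n) F V, b.flag = w := by
  choose v hvmem hvnot using fun i : Fin n =>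
    SetLike.exists_of_lt (hw i.castSucc_lt_succ)
  let u (k : Fin (n + 1)) : Submodule F V := .span F (v '' {i | i.castSucc < k})
  have huw (k) : u k ≤ w k := by
    rw [Submodule.span_le]
    rintro _ ⟨i, hi, rfl⟩
    exact hw.monotone (Fin.castSucc_lt_iff_succ_le.1 hi) (hvmem i)
  have hu : StrictMono u := Fin.strictMono_iff_lt_succ.2 fun i => by
    refine lt_of_le_not_ge (Submodule.span_mono (Set.image_mono fun j hj => ?_)) fun hle => ?_
    · exact lt_trans hj i.castSucc_lt_succ
    · exact hvnot i (huw _ (hle (Submodule.subset_span ⟨i, i.castSucc_lt_succ, rfl⟩)))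
  have hspan : ⊤ ≤ Submodule.span F (Set.range v) := by
    have hlast := (finrank_eq_of_strictMono hn hu (Fin.last n)).trans hn.symm
    rw [← Submodule.eq_top_of_finrank_eq hlast]
    exact Submodule.span_mono (Set.image_subset_range _ _)
  refine ⟨basisOfTopLeSpanOfCardEqFinrank v hspan (by rw [Fintype.card_fin, hn]),
    funext fun k => ?_⟩
  rw [Basis.flag, coe_basisOfTopLeSpanOfCardEqFinrank]
  refine Submodule.eq_of_le_of_finrank_eq (huw k) ?_
  rw [finrank_eq_of_strictMono hn hw k]
  exact finrank_eq_of_strictMono hn hu k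

variable [DecidableEq (Submodule F V)]

theorem exists_basis_image_flag_eq {σ : Finset (Submodule F V)}
    (hσ : IsChainIn (Set.Ioo ⊥ ⊤) σ) (hcard : #σ + 1 = finrank F V) :
    ∃ b : Basis (Fin (finrank F V)) F V, univ.image b.flag = insert ⊤ (insert ⊥ σ) := by
  have hchain : IsChainIn Set.univ (insert ⊤ (insert ⊥ σ)) :=
    ((hσ.mono (Set.subset_univ _)).insert trivial fun _ _ => Or.inr bot_le).insert trivial
      fun _ _ => Or.inl le_top
  have : Nontrivial V := nontrivial_of_finrank_pos (by omega : 0 < finrank F V)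
  obtain ⟨w, hw, himage⟩ := exists_strictMono_image_eq_of_isChain hchain.2
    (show _ = finrank F V + 1 by
      rw [card_insert_of_notMem, card_insert_of_notMem fun h => (hσ.1 h).1.false, hcard]
      simpa using fun h => (hσ.1 h).2.false)
  obtain ⟨b, rfl⟩ := exists_basis_flag_eq rfl hw
  exact ⟨b, himage⟩

theorem exists_orderIso_image_eq {σ σ' : Finset (Submodule F V)}
    (hσ : IsChainIn (Set.Ioo ⊥ ⊤) σ) (hσ' : IsChainIn (Set.Ioo ⊥ ⊤) σ')
    (hcard : #σ + 1 = finrank F V) (hcard' : #σ' + 1 = finrank F V) :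
    ∃ g : Submodule F V ≃o Submodule F V, σ.image g = σ' := by
  obtain ⟨b, hb⟩ := exists_basis_image_flag_eq hσ hcard
  obtain ⟨b', hb'⟩ := exists_basis_image_flag_eq hσ' hcard'
  let g := Submodule.orderIsoMapComap (b.equiv b' (Equiv.refl _))
  have hg : (insert ⊤ (insert ⊥ σ)).image g = insert ⊤ (insert ⊥ σ') := by
    rw [← hb, ← hb', image_image]
    exact image_congr fun k _ => map_flag_equiv b b' k
  rw [image_insert, image_insert, g.map_bot, g.map_top] at hg
  refine ⟨g, ?_⟩
  rw [← (hσ.image_orderIso g).erase_erase_insert_insert, hg, hσ'.erase_erase_insert_insert]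

end Subspaces

theorem sum_Icc_mul_factorial (n : ℕ) :
    ∑ j ∈ Icc 1 n, j * j.factorial = (n + 1).factorial - 1 := by
  induction n with
  | zero => rfl
  | succ n ih =>
    have hpos := (n + 1).factorial_pos
    rw [sum_Icc_succ_top (Nat.le_add_left 1 n), ih, Nat.factorial_succ (n + 1), add_one_mul (n + 1)]
    omega

theorem factorial_sub_one_le_mul_sum (n : ℕ) :
    n.factorial - 1 ≤ (n - 1) * ∑ j ∈ Icc 1 (n - 1), j.factorial := by
  cases n with
  | zero => rfl
  | succ n =>
    rw [Nat.add_sub_cancel, ← sum_Icc_mul_factorial, mul_sum]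
    exact sum_le_sum fun j hj => Nat.mul_le_mul_right _ (mem_Icc.1 hj).2

end BuildingExpansion

open BuildingExpansion Module in
theorem spherical_building_expansion_general {F V : Type*} [Field F] [Finite F] [AddCommGroup V]
    [Module F V] [DecidableEq (Submodule F V)]
    {Δ : Finset (Finset (Submodule F V))} (hΔ : IsOrderComplex (Set.Ioo ⊥ ⊤) Δ)
    (hV : 3 ≤ finrank F V) :
    ((Nat.card F + 1 : ℕ) : ENNReal) / ((finrank F V).factorial - 1 : ℕ) ≤
      cheeger Δ (finrank F V - 3) := by
  have : FiniteDimensional F V := FiniteDimensional.of_finrank_pos (by omega)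
  have : Finite V := Module.finite_of_finite F
  let _ := submoduleGradeMinOrder F V
  have hgrade : grade ℕ (⊤ : Submodule F V) = finrank F V := finrank_top F V
  rw [← hgrade] at hV ⊢
  refine div_le_cheeger_orderComplex hΔ hV (fun σ σ' hσ hσ' hcard hcard' => ?_) fun B T hBT h => ?_
  · exact exists_orderIso_image_eq hσ hσ' (hcard.trans hgrade) (hcard'.trans hgrade)
  · exact card_add_one_le_ncard_Ioo hBT.le h

/-- **Expansion of the spherical building `A_{n-1}(F_q)`**: if `Δ` is the order complex of
the poset of proper nontrivial linear subspaces of `F_q^n` (`n ≥ 3`, `q = |F|`), then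
`h^{n-3}(Δ) ≥ (q+1) / ((n-1) ⬝ Σ_{j=1}^{n-1} j!)`. -/
theorem spherical_building_expansion
    {F : Type*} [Field F] [Fintype F] (q : ℕ) (hq : Fintype.card F = q)
    (n : ℕ) (hn : 3 ≤ n)
    [DecidableEq (Submodule F (Fin n → F))]
    (Δ : Finset (Finset (Submodule F (Fin n → F))))
    (hΔ : ∀ σ : Finset (Submodule F (Fin n → F)), σ ∈ Δ ↔
      σ.Nonempty ∧ (∀ W ∈ σ, W ≠ ⊥ ∧ W ≠ ⊤) ∧ ∀ W ∈ σ, ∀ U ∈ σ, W ≤ U ∨ U ≤ W) :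
    ((q : ENNReal) + 1) /
        (((n : ENNReal) - 1) *
          ((∑ j ∈ Finset.Icc 1 (n - 1), Nat.factorial j : ℕ) : ENNReal)) ≤
      cheeger Δ (n - 3) := by
  subst hq
  have hcomplex : BuildingExpansion.IsOrderComplex (Set.Ioo ⊥ ⊤) Δ := fun σ => by
    refine (hΔ σ).trans (and_congr_right fun _ => and_congr ?_ ?_)
    · exact forall₂_congr fun W _ => and_congr bot_lt_iff_ne_bot.symm lt_top_iff_ne_top.symm
    · exact ⟨fun h W hW U hU _ => h W hW U hU, fun h W hW U hU => h.total hW hU⟩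
  have h := spherical_building_expansion_general hcomplex (by rwa [Module.finrank_fin_fun])
  rw [Module.finrank_fin_fun, Nat.card_eq_fintype_card, Nat.cast_succ] at h
  refine le_trans (ENNReal.div_le_div_left ?_ _) h
  exact_mod_cast BuildingExpansion.factorial_sub_one_le_mul_sum n
end
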